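/- Let A be a cyclic cellular algebra over an integral domain R. Then the wreath product algebra A ≀ 𝔖_n = A^{⊗n} ⋊ 𝔖_n is cyclic cellular, with poset (Λ_n^Γ, ⊵_Γ) of Γ-multipartitions of n ordered by Γ-dominance, and with cellular basis the elements m^λ_{(s,v),(t,w)} = d(s) v y^α x_λ w* d(t)*, where λ ∈ Λ_n^Γ, α = α(λ), s, t are standard λ-tableaux, v, w ∈ V^α, y^α is the tensor product of the elements y_γ in the pattern prescribed by α, and x_λ = Σ_{w ∈ 𝔖_λ} w. -/

import Mathlib

open scoped TensorProduct

/-- A cell datum (Graham–Lehrer cellular basis, in the weak form of Definition 2.1):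
an `R`-linear algebra involution `star`, a poset `Γ`, finite index sets `T γ`, and a basis
`c γ s t` satisfying the cellular multiplication rule (modulo the span `Ā^γ` of the basis
elements `c μ u w` with `μ > γ`) and the cellular involution rule. -/
structure CellDatum (R : Type*) [CommRing R] (A : Type*) [Ring A] [Algebra R A]
    (Γ : Type*) [PartialOrder Γ] (T : Γ → Type*) [∀ γ, Fintype (T γ)] where
  star : A →ₗ[R] A
  star_mul : ∀ a b : A, star (a * b) = star b * star a
  star_star : ∀ a : A, star (star a) = a
  c : (γ : Γ) → T γ → T γ → A
  indep : LinearIndependent R fun p : Σ γ : Γ, T γ × T γ => c p.1 p.2.1 p.2.2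
  span_top : Submodule.span R (Set.range fun p : Σ γ : Γ, T γ × T γ => c p.1 p.2.1 p.2.2) = ⊤
  mult : ∀ (γ : Γ) (s : T γ) (a : A), ∃ r : T γ → R, ∀ t : T γ,
    a * c γ s t - ∑ v : T γ, r v • c γ v t ∈
      Submodule.span R {x : A | ∃ μ : Γ, γ < μ ∧ ∃ u w : T μ, x = c μ u w}
  star_c : ∀ (γ : Γ) (s t : T γ),
    star (c γ s t) - c γ t s ∈
      Submodule.span R {x : A | ∃ μ : Γ, γ < μ ∧ ∃ u w : T μ, x = c μ u w}

namespace CellDatum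

variable {R : Type*} [CommRing R] {A : Type*} [Ring A] [Algebra R A]
  {Γ : Type*} [PartialOrder Γ] {T : Γ → Type*} [∀ γ, Fintype (T γ)]

/-- The ideal `Ā^γ`, spanned by the basis elements `c μ u w` with `μ > γ`. -/
def Abar (D : CellDatum R A Γ T) (γ : Γ) : Submodule R A :=
  Submodule.span R {x : A | ∃ μ : Γ, γ < μ ∧ ∃ u w : T μ, x = D.c μ u w}

/-- The ideal `A^γ`, spanned by the basis elements `c μ u w` with `μ ≥ γ`. -/
def Aup (D : CellDatum R A Γ T) (γ : Γ) : Submodule R A :=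
  Submodule.span R {x : A | ∃ μ : Γ, γ ≤ μ ∧ ∃ u w : T μ, x = D.c μ u w}

end CellDatum

/-- `e : T γ → M` exhibits the `A`-module `M` as (a copy of) the cell module `Δ^γ`:
`e` is an `R`-basis of `M`, and `A` acts on it by the structure coefficients of the cellular
basis. -/
def IsCellModule {R : Type*} [CommRing R] {A : Type*} [Ring A] [Algebra R A]
    {Γ : Type*} [PartialOrder Γ] {T : Γ → Type*} [∀ γ, Fintype (T γ)]
    (D : CellDatum R A Γ T) (γ : Γ) (M : Type*) [AddCommGroup M] [Module R M]
    [Module A M] [IsScalarTower R A M] (e : T γ → M) : Prop :=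
  LinearIndependent R e ∧ Submodule.span R (Set.range e) = ⊤ ∧
    ∀ (a : A) (s : T γ) (r : T γ → R),
      (∀ t : T γ, a * D.c γ s t - ∑ v : T γ, r v • D.c γ v t ∈ D.Abar γ) →
      a • e s = ∑ v : T γ, r v • e v

open scoped Classical

/-- The cells of a multipartition `lam = (λ⁽¹⁾, …, λ⁽ʳ⁾)` (partitions as Young diagrams). -/
def MCells {r : ℕ} (lam : Fin r → YoungDiagram) : Type :=
  (k : Fin r) × {c : ℕ × ℕ // c ∈ (lam k).cells}

noncomputable instance {r : ℕ} (lam : Fin r → YoungDiagram) : Fintype (MCells lam) := by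
  unfold MCells; infer_instance

/-- A `λ`-tableau (a bijective filling of the cells of `λ` with `0, …, n-1`) is
*superstandard* (`t^λ`) if its entries increase in the lexicographic order on
(component, row, column). -/
def IsSuperstandard {r n : ℕ} {lam : Fin r → YoungDiagram}
    (tl : MCells lam ≃ Fin n) : Prop :=
  ∀ x y : MCells lam, tl x ≤ tl y ↔
    (x.1 < y.1 ∨ (x.1 = y.1 ∧ ((x.2 : ℕ × ℕ).1 < (y.2 : ℕ × ℕ).1 ∨
      ((x.2 : ℕ × ℕ).1 = (y.2 : ℕ × ℕ).1 ∧ (x.2 : ℕ × ℕ).2 ≤ (y.2 : ℕ × ℕ).2))))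

/-- A `λ`-tableau is *standard* if within each component its entries increase along rows and
columns. -/
def IsStdTableau {r n : ℕ} {lam : Fin r → YoungDiagram}
    (S : MCells lam ≃ Fin n) : Prop :=
  ∀ x y : MCells lam, x.1 = y.1 → (x.2 : ℕ × ℕ).1 ≤ (y.2 : ℕ × ℕ).1 →
    (x.2 : ℕ × ℕ).2 ≤ (y.2 : ℕ × ℕ).2 → x ≠ y → S x < S y

/-- A `λ`-tableau is *row standard* if within each component its entries increase along
rows. -/
def IsRowStdTableau {r n : ℕ} {lam : Fin r → YoungDiagram}
    (S : MCells lam ≃ Fin n) : Prop :=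
  ∀ x y : MCells lam, x.1 = y.1 → (x.2 : ℕ × ℕ).1 = (y.2 : ℕ × ℕ).1 →
    (x.2 : ℕ × ℕ).2 ≤ (y.2 : ℕ × ℕ).2 → S x ≤ S y

/-- The permutation `d(S)` with `S = d(S) · t^λ`. -/
def dperm {r n : ℕ} {lam : Fin r → YoungDiagram}
    (tl S : MCells lam ≃ Fin n) : Equiv.Perm (Fin n) :=
  tl.symm.trans S

/-- The Young subgroup `𝔖_λ`: the row stabilizer of the tableau `t^λ`. -/
noncomputable def rowStab {r n : ℕ} {lam : Fin r → YoungDiagram}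
    (tl : MCells lam ≃ Fin n) : Finset (Equiv.Perm (Fin n)) :=
  Finset.univ.filter fun σ => ∀ x : MCells lam,
    (tl.symm (σ (tl x))).1 = x.1 ∧
      ((tl.symm (σ (tl x))).2 : ℕ × ℕ).1 = ((x.2 : ℕ × ℕ)).1

/-- Dominance order on multipartitions relative to a listing `l` of the poset `Γ`
(`Γ`-dominance). -/
def GDomL {Γ : Type*} [PartialOrder Γ] {r : ℕ} (l : Fin r → Γ)
    (lam mu : Fin r → YoungDiagram) : Prop :=
  ∀ (k : Fin r) (j : ℕ),
    ((∑ k' ∈ Finset.univ.filter (fun k' => l k < l k'), (mu k').card)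
        + ∑ i ∈ Finset.range j, (mu k).rowLen i)
      ≤ (∑ k' ∈ Finset.univ.filter (fun k' => l k < l k'), (lam k').card)
        + ∑ i ∈ Finset.range j, (lam k).rowLen i

section Wreath

variable {R : Type*} [CommRing R] {A : Type*} [Ring A] [Algebra R A]
  {n : ℕ} {W : Type*} [Ring W] [Algebra R W]

/-- The element `(a₁ ⊗ ⋯ ⊗ aₙ) π` of the wreath product `A ≀ 𝔖_n`, realized inside the
`R`-algebra `W` via the linear isomorphism `φ` with `A^{⊗n} ⊗ R[𝔖_n]`. -/
noncomputable def wm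
    (φ : ((⨂[R] _ : Fin n, A) ⊗[R] (Equiv.Perm (Fin n) →₀ R)) ≃ₗ[R] W)
    (a : Fin n → A) (π : Equiv.Perm (Fin n)) : W :=
  φ ((PiTensorProduct.tprod R a) ⊗ₜ[R] Finsupp.single π (1 : R))

variable (φ : ((⨂[R] _ : Fin n, A) ⊗[R] (Equiv.Perm (Fin n) →₀ R)) ≃ₗ[R] W)

/-- The image in `W` of a permutation `π ∈ 𝔖_n`. -/
noncomputable def sElt (π : Equiv.Perm (Fin n)) : W := wm φ (fun _ => 1) π

/-- The element `y^α = y_{γ(α)₁} ⊗ ⋯ ⊗ y_{γ(α)ₙ}` of `A^{⊗n} ⊂ A ≀ 𝔖_n`, the tensor factor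
at position `i` being indexed by the component of `i` in `t^λ`. -/
noncomputable def yaElt {Γ : Type*} {r : ℕ} {lam : Fin r → YoungDiagram}
    (y : Γ → A) (l : Fin r → Γ) (tl : MCells lam ≃ Fin n) : W :=
  wm φ (fun i => y (l (tl.symm i).1)) 1

/-- An element `v ∈ V^α ⊂ A^{⊗n}`, given by a labelling `τ` of the cells of `λ` by elements
of the corresponding index sets. -/
noncomputable def vElt {Γ : Type*} {T : Γ → Type*} {r : ℕ} {lam : Fin r → YoungDiagram}
    (vv : (γ : Γ) → T γ → A) (l : Fin r → Γ) (tl : MCells lam ≃ Fin n)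
    (τ : ∀ x : MCells lam, T (l x.1)) : W :=
  wm φ (fun i => vv (l (tl.symm i).1) (τ (tl.symm i))) 1

/-- The element `x_λ = ∑_{σ ∈ 𝔖_λ} σ`. -/
noncomputable def xlamElt {r : ℕ} {lam : Fin r → YoungDiagram}
    (tl : MCells lam ≃ Fin n) : W :=
  ∑ σ ∈ rowStab tl, sElt φ σ

end Wreath

/-- The Murphy-type element `m^μ_{(U,τ),(U',τ')} = d(U) v_τ y^α x_μ v_{τ'}* d(U')*` of the
wreath product, relative to a superstandard tableau `tm` of `μ`. -/
noncomputable def mwElt {R : Type*} [CommRing R] {A : Type*} [Ring A] [Algebra R A]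
    {n : ℕ} {W : Type*} [Ring W] [Algebra R W]
    (φ : ((⨂[R] _ : Fin n, A) ⊗[R] (Equiv.Perm (Fin n) →₀ R)) ≃ₗ[R] W)
    (starW : W →ₗ[R] W) {Γ : Type*} {T : Γ → Type*} {r : ℕ}
    (y : Γ → A) (vv : (γ : Γ) → T γ → A) (l : Fin r → Γ)
    {mu : Fin r → YoungDiagram} (tm : MCells mu ≃ Fin n)
    (U U' : MCells mu ≃ Fin n) (τ τ' : ∀ x : MCells mu, T (l x.1)) : W :=
  sElt φ (dperm tm U) * vElt φ vv l tm τ * yaElt φ y l tm * xlamElt φ tm *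
    starW (vElt φ vv l tm τ') * starW (sElt φ (dperm tm U'))

/-- Multipartitions of total size `n` with `r` components. -/
def MPar (r n : ℕ) : Type := {lam : Fin r → YoungDiagram // ∑ k, (lam k).card = n}

/-- The index set `T(λ)` for the cellular basis of the wreath product: pairs `(s, v)` with
`s` a standard `λ`-tableau and `v ∈ V^{α(λ)}` (encoded by a labelling of the cells). -/
def TabIdx {Γ : Type*} (T : Γ → Type*) {r : ℕ} (l : Fin r → Γ) (n : ℕ)
    (lam : Fin r → YoungDiagram) : Type _ :=
  {S : MCells lam ≃ Fin n // IsStdTableau S} × (∀ x : MCells lam, T (l x.1))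

noncomputable instance {Γ : Type*} (T : Γ → Type*) [∀ γ, Fintype (T γ)] {r : ℕ}
    (l : Fin r → Γ) (n : ℕ) (lam : Fin r → YoungDiagram) :
    Fintype (TabIdx T l n lam) := by
  unfold TabIdx; infer_instance

/-!
Let `x_f` be the sum of the stabiliser of a function `f : Fin n → Γ × ℕ`, to be thought of as a
filling of the rows of a `Γ`-multipartition, and let `y_f` be the tensor product of the `y_γ` in
the pattern given by `f`. Modulo the two-sided ideal generated by the `y_g x_g` with `g` strictly
more dominant than `f`, two kinds of straightening express `a * y_f x_f` through the elements
`d(s) v y_f x_f`: the cell module relations of `A` are applied in each tensor factor, and Garnir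
relations rewrite a permutation in terms of those attached to standard tableaux. Applying the
involution gives the same on the right, so the Murphy-type elements span, and a well-founded
induction along dominance turns the ideals into spans of Murphy-type elements.

Linear independence is a count. The weighted graph of Young diagrams is differential in the sense
of Stanley, so that `∑_λ f_λ² ∏_k |T_k|^(2|λ_k|) = (∑_k |T_k|²)^n n!`. This is the rank of
`A ≀ 𝔖_n`, and a spanning family of that size over a commutative ring is a basis.
-/

/-! ### Linear extensions of finite lower sets -/

section LinearExtensions

variable {α : Type*} [PartialOrder α] {s : Finset α} {b c : α} {n : ℕ}

/-- The elements whose removal from a lower set leaves a lower set. -/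
noncomputable def removable (s : Finset α) : Finset α :=
  s.filter fun b => Maximal (· ∈ s) b

/-- The number of linear extensions of a finite set with `n` elements, computed by removing a
maximal element as the last one. -/
noncomputable def linExtCount : ℕ → Finset α → ℕ
  | 0, _ => 1
  | n + 1, s => ∑ b ∈ removable s, linExtCount n (s.erase b)

lemma linExtCount_succ (n : ℕ) (s : Finset α) :
    linExtCount (n + 1) s = ∑ b ∈ removable s, linExtCount n (s.erase b) :=
  rfl

/-- An enumeration `q` of `s` is a linear extension of the order of `s`. -/
def IsLinExt (s : Finset α) (q : Fin n → α) : Prop :=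
  Set.range q = s ∧ ∀ i j, q i ≤ q j → i ≤ j

lemma mem_removable : b ∈ removable s ↔ Maximal (· ∈ s) b := by
  simpa [removable] using fun h : Maximal (· ∈ s) b => h.prop

lemma removable_empty : removable (∅ : Finset α) = ∅ := Finset.filter_empty _

lemma removable_singleton (c : α) : removable {c} = {c} := by
  ext x
  simp [mem_removable]

lemma isLowerSet_erase (hs : IsLowerSet (s : Set α)) (hb : b ∈ removable s) :
    IsLowerSet ((s.erase b : Finset α) : Set α) := by
  rw [Finset.coe_erase]
  exact hs.erase fun x hx hbx => ((mem_removable.1 hb).eq_of_le hx hbx).symm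

lemma isLowerSet_insert (hs : IsLowerSet (s : Set α)) (hc : Minimal (· ∉ s) c) :
    IsLowerSet ((insert c s : Finset α) : Set α) := by
  intro x z hzx hx
  simp only [Finset.coe_insert, Set.mem_insert_iff, Finset.mem_coe] at hx ⊢
  rcases hx with rfl | hx
  · by_contra! h
    exact h.1 (hc.eq_of_le h.2 hzx)
  · exact Or.inr (hs hzx hx)

lemma mem_removable_insert (hs : IsLowerSet (s : Set α)) (hc : c ∉ s) :
    c ∈ removable (insert c s) := by
  refine mem_removable.2 ⟨Finset.mem_insert_self c s, fun x hx hcx => ?_⟩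
  rcases Finset.mem_insert.1 hx with rfl | hx
  · exact le_rfl
  · exact absurd (hs hcx hx) hc

lemma minimal_notMem_erase (hs : IsLowerSet (s : Set α)) (hb : b ∈ s) :
    Minimal (· ∉ s.erase b) b := by
  refine ⟨Finset.notMem_erase b s, fun x hx hxb => ?_⟩
  by_contra h
  exact hx (Finset.mem_erase.2 ⟨fun h' => h h'.ge, hs hxb hb⟩)

lemma minimal_and_maximal_insert_iff (hne : c ≠ b) :
    Minimal (· ∉ s) c ∧ b ∈ removable (insert c s) ↔
      b ∈ removable s ∧ Minimal (· ∉ s.erase b) c := by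
  simp only [mem_removable]
  constructor
  · rintro ⟨hc, hb⟩
    refine ⟨⟨Finset.mem_of_mem_insert_of_ne hb.prop hne.symm,
      fun x hx hbx => hb.2 (Finset.mem_insert_of_mem hx) hbx⟩,
      fun h => hc.prop (Finset.mem_of_mem_erase h), fun x hx hxc => ?_⟩
    by_cases hxs : x ∈ s
    · obtain rfl : x = b := by
        by_contra h
        exact hx (Finset.mem_erase.2 ⟨h, hxs⟩)
      exact hb.2 (Finset.mem_insert_self c s) hxc
    · exact hc.2 hxs hxc
  · rintro ⟨hb, hc⟩
    refine ⟨⟨fun h => hc.prop (Finset.mem_erase.2 ⟨hne, h⟩),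
      fun x hx hxc => hc.2 (fun h => hx (Finset.mem_of_mem_erase h)) hxc⟩,
      Finset.mem_insert_of_mem hb.prop, fun x hx hbx => ?_⟩
    rcases Finset.mem_insert.1 hx with rfl | hx
    · exact hc.2 (Finset.notMem_erase b s) hbx
    · exact hb.2 hx hbx

lemma IsLinExt.last_mem_removable {q : Fin (n + 1) → α} (hq : IsLinExt s q) :
    q (Fin.last n) ∈ removable s := by
  refine mem_removable.2 ⟨Finset.mem_coe.1 (hq.1 ▸ Set.mem_range_self _), fun x hx hle => ?_⟩
  obtain ⟨i, rfl⟩ : x ∈ Set.range q := hq.1 ▸ Finset.mem_coe.2 hx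
  rw [Fin.last_le_iff.1 (hq.2 _ _ hle)]

lemma IsLinExt.injective {q : Fin n → α} (hq : IsLinExt s q) : Function.Injective q :=
  fun i j h => le_antisymm (hq.2 i j h.le) (hq.2 j i h.ge)

lemma IsLinExt.init {q : Fin (n + 1) → α} (hq : IsLinExt s q) :
    IsLinExt (s.erase (q (Fin.last n))) (Fin.init q) := by
  refine ⟨?_, fun i j h => by simpa using hq.2 _ _ h⟩
  ext x
  rw [Finset.coe_erase, ← hq.1]
  constructor
  · rintro ⟨i, rfl⟩
    exact ⟨⟨_, rfl⟩, fun h => (Fin.castSucc_lt_last i).ne (hq.injective h)⟩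
  · rintro ⟨⟨i, rfl⟩, h⟩
    induction i using Fin.lastCases with
    | last => exact absurd rfl h
    | cast i => exact ⟨i, rfl⟩

lemma finite_isLinExt (n : ℕ) (s : Finset α) : Finite {q : Fin n → α // IsLinExt s q} :=
  (Set.Finite.pi' fun _ : Fin n => s.finite_toSet).subset fun q (hq : IsLinExt s q) i =>
    hq.1 ▸ Set.mem_range_self i

lemma card_isLinExt_le (n : ℕ) (s : Finset α) :
    Nat.card {q : Fin n → α // IsLinExt s q} ≤ linExtCount n s := by
  induction n generalizing s with
  | zero => exact Finite.card_le_one_iff_subsingleton.2 inferInstance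
  | succ n ih =>
    have := finite_isLinExt (α := α) n
    let split (q : {q : Fin (n + 1) → α // IsLinExt s q}) :
        Σ b : removable s, {q : Fin n → α // IsLinExt (s.erase b.1) q} :=
      ⟨⟨q.1 (Fin.last n), q.2.last_mem_removable⟩, ⟨Fin.init q.1, q.2.init⟩⟩
    have split_injective : Function.Injective split := by
      rintro ⟨q, hq⟩ ⟨q', hq'⟩ h
      have hlast : q (Fin.last n) = q' (Fin.last n) := congrArg (fun z => z.1.1) h
      have hinit : Fin.init q = Fin.init q' := congrArg (fun z => z.2.1) h
      refine Subtype.ext ?_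
      change q = q'
      rw [← Fin.snoc_init_self q, ← Fin.snoc_init_self q', hlast, hinit]
    refine (Nat.card_le_card_of_injective split split_injective).trans ?_
    rw [Nat.card_sigma, linExtCount_succ, ← Finset.sum_coe_sort (removable s)]
    exact Finset.sum_le_sum fun b _ => ih _

/-- A weighted form of Stanley's differential posets for the lattice of finite lower sets:
`addable s` lists the minimal elements outside a finite lower set `s`, and their total weight
exceeds that of the maximal elements of `s` by the constant `t`. -/
structure IsDifferential (addable : Finset α → Finset α) (w : α → ℕ) (t : ℕ) : Prop where
  mem_addable : ∀ {s : Finset α}, IsLowerSet (s : Set α) →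
    ∀ {c}, c ∈ addable s ↔ Minimal (· ∉ s) c
  sum_addable : ∀ {s : Finset α}, IsLowerSet (s : Set α) →
    ∑ c ∈ addable s, w c = t + ∑ b ∈ removable s, w b

/-- The lower sets with `n` elements, built by adding one element at a time. -/
noncomputable def lowerSets (addable : Finset α → Finset α) : ℕ → Finset (Finset α)
  | 0 => {∅}
  | n + 1 => (lowerSets addable n).biUnion fun s => (addable s).image (insert · s)

namespace IsDifferential

variable {addable : Finset α → Finset α} {w : α → ℕ} {t : ℕ}

lemma mem_lowerSets (h : IsDifferential addable w t) :
    s ∈ lowerSets addable n ↔ s.card = n ∧ IsLowerSet (s : Set α) := by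
  induction n generalizing s with
  | zero =>
    rw [lowerSets, Finset.mem_singleton, Finset.card_eq_zero, iff_self_and]
    rintro rfl
    simpa using isLowerSet_empty
  | succ n ih =>
    simp only [lowerSets, Finset.mem_biUnion, Finset.mem_image]
    constructor
    · rintro ⟨s, hs, c, hc, rfl⟩
      obtain ⟨hcard, hlow⟩ := ih.1 hs
      have hc := (h.mem_addable hlow).1 hc
      exact ⟨by rw [Finset.card_insert_of_notMem hc.prop, hcard], isLowerSet_insert hlow hc⟩
    · rintro ⟨hcard, hlow⟩
      obtain ⟨b, hb⟩ := s.exists_maximal (Finset.card_pos.1 (by omega))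
      have hlow' := isLowerSet_erase hlow (mem_removable.2 hb)
      refine ⟨s.erase b, ih.2 ⟨?_, hlow'⟩, b, ?_, Finset.insert_erase hb.prop⟩
      · rw [Finset.card_erase_of_mem hb.prop, hcard, Nat.add_sub_cancel]
      · exact (h.mem_addable hlow').2 (minimal_notMem_erase hlow hb.prop)

lemma sum_sum_removable_insert (h : IsDifferential addable w t) (hs : IsLowerSet (s : Set α))
    (g : α → Finset α → ℕ) :
    ∑ c ∈ addable s, ∑ b ∈ (removable (insert c s)).erase c, g c ((insert c s).erase b) =
      ∑ b ∈ removable s, ∑ c ∈ (addable (s.erase b)).erase b, g c (insert c (s.erase b)) := by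
  have hiff (c b : α) : (c ∈ addable s ∧ b ∈ (removable (insert c s)).erase c) ↔
      (c ∈ (addable (s.erase b)).erase b ∧ b ∈ removable s) := by
    rw [h.mem_addable hs, Finset.mem_erase, Finset.mem_erase]
    constructor
    · rintro ⟨hc, hne, hb⟩
      obtain ⟨hb, hc⟩ := (minimal_and_maximal_insert_iff hne.symm).1 ⟨hc, hb⟩
      exact ⟨⟨hne.symm, (h.mem_addable (isLowerSet_erase hs hb)).2 hc⟩, hb⟩
    · rintro ⟨⟨hne, hc⟩, hb⟩
      obtain ⟨hc, hb⟩ := (minimal_and_maximal_insert_iff hne).2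
        ⟨hb, (h.mem_addable (isLowerSet_erase hs hb)).1 hc⟩
      exact ⟨hc, hne.symm, hb⟩
  rw [Finset.sum_comm' hiff]
  refine Finset.sum_congr rfl fun b _ => Finset.sum_congr rfl fun c hc => ?_
  rw [Finset.erase_insert_of_ne (Finset.ne_of_mem_erase hc)]

lemma sum_mul_linExtCount_insert (h : IsDifferential addable w t)
    (hs : IsLowerSet (s : Set α)) (n : ℕ) :
    ∑ c ∈ addable s, w c * linExtCount (n + 1) (insert c s) =
      (∑ c ∈ addable s, w c) * linExtCount n s +
        ∑ c ∈ addable s, ∑ b ∈ (removable (insert c s)).erase c,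
          w c * linExtCount n ((insert c s).erase b) := by
  rw [Finset.sum_mul, ← Finset.sum_add_distrib]
  refine Finset.sum_congr rfl fun c hc => ?_
  have hcs := ((h.mem_addable hs).1 hc).prop
  rw [linExtCount_succ, ← Finset.add_sum_erase _ _ (mem_removable_insert hs hcs),
    Finset.erase_insert hcs, mul_add, Finset.mul_sum]

/-- The commutation relation `DU - UD = t` of differential posets, applied to linear
extensions. -/
lemma sum_addable_mul_linExtCount (h : IsDifferential addable w t)
    (hs : IsLowerSet (s : Set α)) (hn : s.card = n) :
    ∑ c ∈ addable s, w c * linExtCount (n + 1) (insert c s) =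
      (n + 1) * t * linExtCount n s := by
  induction n generalizing s with
  | zero =>
    obtain rfl := Finset.card_eq_zero.1 hn
    simpa [linExtCount, removable_singleton, removable_empty] using h.sum_addable hs
  | succ n ih =>
    have hdown : ∀ b ∈ removable s, w b * linExtCount (n + 1) s +
        ∑ c ∈ (addable (s.erase b)).erase b, w c * linExtCount (n + 1) (insert c (s.erase b)) =
          (n + 1) * t * linExtCount n (s.erase b) := by
      intro b hb
      have hbs := (mem_removable.1 hb).prop
      have hlow := isLowerSet_erase hs hb
      have hb' : b ∈ addable (s.erase b) := (h.mem_addable hlow).2 (minimal_notMem_erase hs hbs)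
      rw [← ih hlow (by rw [Finset.card_erase_of_mem hbs, hn, Nat.add_sub_cancel]),
        ← Finset.add_sum_erase _ _ hb', Finset.insert_erase hbs]
    calc ∑ c ∈ addable s, w c * linExtCount (n + 2) (insert c s)
      _ = t * linExtCount (n + 1) s + ∑ b ∈ removable s, (w b * linExtCount (n + 1) s +
            ∑ c ∈ (addable (s.erase b)).erase b,
              w c * linExtCount (n + 1) (insert c (s.erase b))) := by
          rw [h.sum_mul_linExtCount_insert hs,
            h.sum_sum_removable_insert hs fun c s' => w c * linExtCount (n + 1) s',
            h.sum_addable hs, add_mul, Finset.sum_mul, add_assoc, Finset.sum_add_distrib]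
      _ = t * linExtCount (n + 1) s + (n + 1) * t * linExtCount (n + 1) s := by
          rw [Finset.sum_congr rfl hdown, ← Finset.mul_sum, ← linExtCount_succ]
      _ = _ := by ring

lemma sum_lowerSets_succ (h : IsDifferential addable w t) (g : Finset α → α → ℕ) (n : ℕ) :
    ∑ s ∈ lowerSets addable (n + 1), ∑ b ∈ removable s, g s b =
      ∑ s ∈ lowerSets addable n, ∑ c ∈ addable s, g (insert c s) c := by
  rw [Finset.sum_sigma', Finset.sum_sigma']
  refine Finset.sum_bij' (fun x _ => ⟨x.1.erase x.2, x.2⟩) (fun x _ => ⟨insert x.2 x.1, x.2⟩)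
    ?_ ?_ ?_ ?_ ?_
  all_goals
    rintro ⟨s, b⟩ hsb
    simp only [Finset.mem_sigma, h.mem_lowerSets] at hsb ⊢
  · have hb := (mem_removable.1 hsb.2).prop
    have hlow := isLowerSet_erase hsb.1.2 hsb.2
    exact ⟨⟨by rw [Finset.card_erase_of_mem hb, hsb.1.1, Nat.add_sub_cancel], hlow⟩,
      (h.mem_addable hlow).2 (minimal_notMem_erase hsb.1.2 hb)⟩
  · have hb := (h.mem_addable hsb.1.2).1 hsb.2
    exact ⟨⟨by rw [Finset.card_insert_of_notMem hb.prop, hsb.1.1], isLowerSet_insert hsb.1.2 hb⟩,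
      mem_removable_insert hsb.1.2 hb.prop⟩
  · rw [Finset.insert_erase (mem_removable.1 hsb.2).prop]
  · rw [Finset.erase_insert ((h.mem_addable hsb.1.2).1 hsb.2).prop]
  · rw [Finset.insert_erase (mem_removable.1 hsb.2).prop]

theorem sum_linExtCount_sq (h : IsDifferential addable w t) (n : ℕ) :
    ∑ s ∈ lowerSets addable n, linExtCount n s ^ 2 * ∏ c ∈ s, w c = t ^ n * n.factorial := by
  induction n with
  | zero => simp [lowerSets, linExtCount]
  | succ n ih =>
    calc ∑ s ∈ lowerSets addable (n + 1), linExtCount (n + 1) s ^ 2 * ∏ c ∈ s, w c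
      _ = ∑ s ∈ lowerSets addable (n + 1), ∑ b ∈ removable s,
            linExtCount (n + 1) s * linExtCount n (s.erase b) * ∏ c ∈ s, w c :=
          Finset.sum_congr rfl fun s _ => by
            rw [← Finset.sum_mul, ← Finset.mul_sum, sq, ← linExtCount_succ]
      _ = ∑ s ∈ lowerSets addable n, (∑ c ∈ addable s, w c * linExtCount (n + 1) (insert c s)) *
            (linExtCount n s * ∏ c ∈ s, w c) := by
          rw [h.sum_lowerSets_succ]
          refine Finset.sum_congr rfl fun s hs => ?_
          rw [Finset.sum_mul]
          refine Finset.sum_congr rfl fun c hc => ?_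
          have hcs := ((h.mem_addable (h.mem_lowerSets.1 hs).2).1 hc).prop
          rw [Finset.erase_insert hcs, Finset.prod_insert hcs]
          ring
      _ = ∑ s ∈ lowerSets addable n, (n + 1) * t * (linExtCount n s ^ 2 * ∏ c ∈ s, w c) := by
          refine Finset.sum_congr rfl fun s hs => ?_
          obtain ⟨hcard, hlow⟩ := h.mem_lowerSets.1 hs
          rw [h.sum_addable_mul_linExtCount hlow hcard]
          ring
      _ = t ^ (n + 1) * (n + 1).factorial := by
          rw [← Finset.mul_sum, ih, Nat.factorial_succ]
          ring

end IsDifferential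

end LinearExtensions

/-! ### Boxes of multipartitions -/

/-- The poset of boxes of multipartitions with components indexed by `κ`: disjoint copies of
`ℕ × ℕ`, a box being given by its component, row and column. -/
abbrev Box (κ : Type*) : Type _ := Σ _ : κ, ℕ × ℕ

namespace Box

variable {κ : Type*} {s : Finset (Box κ)} {k : κ} {i j : ℕ}

lemma le_iff {x z : Box κ} : x ≤ z ↔ x.1 = z.1 ∧ x.2.1 ≤ z.2.1 ∧ x.2.2 ≤ z.2.2 := by
  obtain ⟨k, a⟩ := x
  obtain ⟨k', b⟩ := z
  rw [Sigma.le_def]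
  constructor
  · rintro ⟨h, h'⟩
    obtain rfl : k = k' := h
    exact ⟨rfl, h'⟩
  · rintro ⟨h, h'⟩
    obtain rfl : k = k' := h
    exact ⟨rfl, h'⟩

lemma mk_le_mk {i' j' : ℕ} : (⟨k, i, j⟩ : Box κ) ≤ ⟨k, i', j'⟩ ↔ i ≤ i' ∧ j ≤ j' := by
  simp

/-- The length of row `i` of component `k` of a finite lower set of boxes. -/
noncomputable def rowEnd (s : Finset (Box κ)) (k : κ) (i : ℕ) : ℕ :=
  Nat.find (p := fun j => (⟨k, i, j⟩ : Box κ) ∉ s) <|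
    (Infinite.exists_notMem_finset (s.image (·.2.2))).imp fun _ hj h =>
      hj (Finset.mem_image.2 ⟨_, h, rfl⟩)

lemma mem_iff_lt_rowEnd (hs : IsLowerSet (s : Set (Box κ))) :
    (⟨k, i, j⟩ : Box κ) ∈ s ↔ j < rowEnd s k i := by
  rw [rowEnd, Nat.lt_find_iff]
  refine ⟨fun h m hm => not_not.2 (hs (mk_le_mk.2 ⟨le_rfl, hm⟩) h), fun h => ?_⟩
  simpa using h j le_rfl

lemma rowEnd_antitone (hs : IsLowerSet (s : Set (Box κ))) (k : κ) : Antitone (rowEnd s k) := by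
  intro i i' h
  by_contra! hlt
  have hmem := hs (mk_le_mk.2 ⟨h, le_rfl⟩) ((mem_iff_lt_rowEnd hs).2 hlt)
  exact lt_irrefl _ ((mem_iff_lt_rowEnd hs).1 hmem)

lemma mem_removable_iff (hs : IsLowerSet (s : Set (Box κ))) :
    (⟨k, i, j⟩ : Box κ) ∈ removable s ↔ rowEnd s k i = j + 1 ∧ rowEnd s k (i + 1) ≤ j := by
  rw [mem_removable]
  constructor
  · intro h
    have hj := (mem_iff_lt_rowEnd hs).1 h.prop
    refine ⟨?_, ?_⟩ <;> by_contra! hne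
    · have := mk_le_mk.1 (h.2 ((mem_iff_lt_rowEnd hs).2 (show j + 1 < _ by omega))
        (mk_le_mk.2 ⟨le_rfl, j.le_succ⟩))
      exact absurd this.2 (by simp)
    · have := mk_le_mk.1 (h.2 ((mem_iff_lt_rowEnd hs).2 hne) (mk_le_mk.2 ⟨i.le_succ, le_rfl⟩))
      exact absurd this.1 (by simp)
  · rintro ⟨hi, hi'⟩
    refine ⟨(mem_iff_lt_rowEnd hs).2 (by omega), ?_⟩
    rintro ⟨k', i', j'⟩ hmem hle
    obtain ⟨h1, h2, h3⟩ := le_iff.1 hle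
    dsimp only at h1 h2 h3
    subst h1
    have hj' := (mem_iff_lt_rowEnd hs).1 hmem
    obtain rfl | hlt := h2.eq_or_lt
    · exact mk_le_mk.2 ⟨le_rfl, by omega⟩
    · have := rowEnd_antitone hs k (show i + 1 ≤ i' from hlt)
      omega

lemma minimal_notMem_iff (hs : IsLowerSet (s : Set (Box κ))) :
    Minimal (· ∉ s) (⟨k, i, j⟩ : Box κ) ↔
      rowEnd s k i = j ∧ ∀ i', i = i' + 1 → j < rowEnd s k i' := by
  have hnot (i j : ℕ) : (⟨k, i, j⟩ : Box κ) ∉ s ↔ rowEnd s k i ≤ j := by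
    rw [mem_iff_lt_rowEnd hs, not_lt]
  constructor
  · intro h
    refine ⟨le_antisymm ((hnot i j).1 h.prop) ?_, ?_⟩
    · exact (mk_le_mk.1 (h.2 ((hnot i _).2 le_rfl)
        (mk_le_mk.2 ⟨le_rfl, (hnot i j).1 h.prop⟩))).2
    · rintro i' rfl
      by_contra! hle
      have := (mk_le_mk.1 (h.2 ((hnot i' j).2 hle) (mk_le_mk.2 ⟨i'.le_succ, le_rfl⟩))).1
      exact absurd this (by simp)
  · rintro ⟨rfl, hi⟩
    refine ⟨(hnot _ _).2 le_rfl, ?_⟩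
    rintro ⟨k', i', j'⟩ hmem hle
    obtain ⟨h1, h2, h3⟩ := le_iff.1 hle
    dsimp only at h1 h2 h3
    subst h1
    have hj' := (hnot i' j').1 hmem
    obtain rfl | hlt := h2.eq_or_lt
    · exact mk_le_mk.2 ⟨le_rfl, hj'⟩
    · have := hi (i - 1) (by omega)
      have := rowEnd_antitone hs k' (show i' ≤ i - 1 by omega)
      omega

/-- The box at the end of the row below the row of `b`. -/
noncomputable def endOfNextRow (s : Finset (Box κ)) (b : Box κ) : Box κ :=
  ⟨b.1, b.2.1 + 1, rowEnd s b.1 (b.2.1 + 1)⟩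

lemma endOfNextRow_injOn (hs : IsLowerSet (s : Set (Box κ))) :
    Set.InjOn (endOfNextRow s) (removable s : Set (Box κ)) := by
  rintro ⟨k, i, j⟩ ha ⟨k', i', j'⟩ hb h
  have ha := ((mem_removable_iff hs).1 ha).1
  have hb := ((mem_removable_iff hs).1 hb).1
  simp only [endOfNextRow, Sigma.mk.injEq] at h
  obtain ⟨rfl, h⟩ := h
  simp only [heq_eq_eq, Prod.mk.injEq, Nat.add_right_cancel_iff] at h
  obtain ⟨rfl, -⟩ := h
  obtain rfl : j = j' := by omega
  rfl

variable [Fintype κ]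

/-- The boxes that can be added to a lower set: one in the first row of each component, and one
below each removable box. -/
noncomputable def addable (s : Finset (Box κ)) : Finset (Box κ) :=
  (Finset.univ.image fun k => ⟨k, 0, rowEnd s k 0⟩) ∪ (removable s).image (endOfNextRow s)

lemma mem_addable_iff (hs : IsLowerSet (s : Set (Box κ))) {c : Box κ} :
    c ∈ addable s ↔ Minimal (· ∉ s) c := by
  obtain ⟨k, i, j⟩ := c
  rw [minimal_notMem_iff hs]
  simp only [addable, Finset.mem_union, Finset.mem_image, Finset.mem_univ, true_and]
  constructor
  · rintro (⟨k', h⟩ | ⟨⟨k', i', j'⟩, hb, h⟩)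
    · cases h
      simp
    · cases h
      obtain ⟨h, h'⟩ := (mem_removable_iff hs).1 hb
      refine ⟨rfl, fun i hi => ?_⟩
      obtain rfl : i' = i := Nat.succ_injective hi
      dsimp only
      omega
  · rintro ⟨rfl, hi⟩
    rcases i with _ | i
    · exact Or.inl ⟨k, rfl⟩
    · have hlt := hi i rfl
      exact Or.inr ⟨⟨k, i, rowEnd s k i - 1⟩,
        (mem_removable_iff hs).2 ⟨by omega, by omega⟩, rfl⟩

lemma isDifferential_addable (w : κ → ℕ) :
    IsDifferential (addable (κ := κ)) (fun c => w c.1) (∑ k, w k) where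
  mem_addable hs := mem_addable_iff hs
  sum_addable {s} hs := by
    have hdisj : Disjoint (Finset.univ.image fun k : κ => (⟨k, 0, rowEnd s k 0⟩ : Box κ))
        ((removable s).image (endOfNextRow s)) := by
      rw [Finset.disjoint_left]
      intro x hx hx'
      obtain ⟨k, -, rfl⟩ := Finset.mem_image.1 hx
      obtain ⟨b, -, hb⟩ := Finset.mem_image.1 hx'
      cases hb
    rw [addable, Finset.sum_union hdisj, Finset.sum_image fun a _ b _ h => congrArg Sigma.fst h,
      Finset.sum_image (endOfNextRow_injOn hs)]
    rfl

end Box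

/-! ### Cyclic cellular algebras -/

/-- An `R`-linear anti-automorphism of `A` of order at most two. -/
structure IsAntiInvolution {R : Type*} [CommRing R] {A : Type*} [Ring A] [Algebra R A]
    (star : A →ₗ[R] A) : Prop where
  map_mul : ∀ a b : A, star (a * b) = star b * star a
  apply_apply : ∀ a : A, star (star a) = a

/-- The span of the two-sided ideals generated by the `y μ` with `μ > γ`. It plays the role of
`Ā^γ` without reference to a cellular basis. -/
def aboveIdeal (R : Type*) [CommRing R] {A : Type*} [Ring A] [Algebra R A] {Γ : Type*}
    [PartialOrder Γ] (y : Γ → A) (γ : Γ) : Submodule R A :=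
  Submodule.span R {x | ∃ (μ : Γ) (u w : A), γ < μ ∧ x = u * y μ * w}

/-- Cyclic cellularity of `A` expressed through the elements `y γ` and `v t` alone, without
reference to a cellular basis or to cell modules. -/
structure IsCyclicCellular {R : Type*} [CommRing R] {A : Type*} [Ring A] [Algebra R A]
    {Γ : Type*} [PartialOrder Γ] {T : Γ → Type*}
    (star : A →ₗ[R] A) (y : Γ → A) (vv : ∀ γ, T γ → A) : Prop where
  star_y : ∀ γ, star (y γ) ≡ y γ [SMOD aboveIdeal R y γ]
  mul_y : ∀ γ a, ∃ b ∈ Submodule.span R (Set.range fun t => vv γ t * y γ),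
    a * y γ ≡ b [SMOD aboveIdeal R y γ]
  span_y : Submodule.span R {x : A | ∃ (γ : Γ) (u w : A), x = u * y γ * w} = ⊤

namespace CellDatum

variable {R : Type*} [CommRing R] {A : Type*} [Ring A] [Algebra R A]
  {Γ : Type*} [PartialOrder Γ] {T : Γ → Type*} [∀ γ, Fintype (T γ)]
  (D : CellDatum R A Γ T) {γ μ : Γ}

lemma isAntiInvolution : IsAntiInvolution D.star :=
  ⟨D.star_mul, D.star_star⟩

lemma Abar_mono (h : γ ≤ μ) : D.Abar μ ≤ D.Abar γ :=
  Submodule.span_mono fun _ ⟨ν, hν, h'⟩ => ⟨ν, h.trans_lt hν, h'⟩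

variable {D}

lemma c_mem_Abar (h : γ < μ) (s t : T μ) : D.c μ s t ∈ D.Abar γ :=
  Submodule.subset_span ⟨μ, h, s, t, rfl⟩

lemma mul_mem_Abar {x : A} (a : A) (hx : x ∈ D.Abar γ) : a * x ∈ D.Abar γ := by
  induction hx using Submodule.span_induction with
  | mem x h =>
    obtain ⟨μ, hμ, s, t, rfl⟩ := h
    obtain ⟨ρ, hρ⟩ := D.mult μ s a
    exact (Submodule.sub_mem_iff_left _ (Submodule.sum_mem _ fun v _ =>
      Submodule.smul_mem _ _ (c_mem_Abar hμ v t))).1 (D.Abar_mono hμ.le (hρ t))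
  | zero => simp
  | add x y _ _ hx hy => rw [mul_add]; exact add_mem hx hy
  | smul c x _ hx => rw [mul_smul_comm]; exact Submodule.smul_mem _ _ hx

lemma star_mem_Abar {x : A} (hx : x ∈ D.Abar γ) : D.star x ∈ D.Abar γ := by
  induction hx using Submodule.span_induction with
  | mem x h =>
    obtain ⟨μ, hμ, s, t, rfl⟩ := h
    exact (Submodule.sub_mem_iff_left _ (c_mem_Abar hμ t s)).1
      (D.Abar_mono hμ.le (D.star_c μ s t))
  | zero => simp
  | add x y _ _ hx hy => rw [map_add]; exact add_mem hx hy
  | smul c x _ hx => rw [map_smul]; exact Submodule.smul_mem _ _ hx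

section Congruence

variable {x z : A}

lemma mul_congr_left (a : A) (h : x ≡ z [SMOD D.Abar γ]) : a * x ≡ a * z [SMOD D.Abar γ] := by
  rw [SModEq.sub_mem] at h ⊢
  rw [← mul_sub]
  exact mul_mem_Abar a h

lemma star_congr (h : x ≡ z [SMOD D.Abar γ]) : D.star x ≡ D.star z [SMOD D.Abar γ] := by
  rw [SModEq.sub_mem] at h ⊢
  rw [← map_sub]
  exact star_mem_Abar h

lemma mul_congr_right (a : A) (h : x ≡ z [SMOD D.Abar γ]) : x * a ≡ z * a [SMOD D.Abar γ] := by
  simpa only [D.star_mul, D.star_star] using star_congr (mul_congr_left (D.star a) (star_congr h))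

lemma star_c_congr (s t : T γ) : D.star (D.c γ s t) ≡ D.c γ t s [SMOD D.Abar γ] :=
  SModEq.sub_mem.2 (D.star_c γ s t)

end Congruence

variable (D) in
/-- The copy of the cell module `Δ^γ` spanned by the column `c γ · t` of the cellular basis, as a
map from coordinate vectors. -/
def col (γ : Γ) (t : T γ) : (T γ → R) →ₗ[R] A :=
  Fintype.linearCombination R fun s => D.c γ s t

lemma col_apply (t : T γ) (q : T γ → R) : D.col γ t q = ∑ s, q s • D.c γ s t :=
  Fintype.linearCombination_apply R _ q

lemma col_single (s t : T γ) : D.col γ t (Pi.single s 1) = D.c γ s t := by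
  rw [col, Fintype.linearCombination_apply_single, one_smul]

section CellModule

variable {M : Type*} [AddCommGroup M] [Module R M] [Module A M] [IsScalarTower R A M]
  {e : T γ → M} {p : T γ → R} {y : A} {v : T γ → A}

lemma exists_mul_col (hM : IsCellModule D γ M e) (a : A) (q : T γ → R) : ∃ ρ : T γ → R,
    (∀ t, a * D.col γ t q ≡ D.col γ t ρ [SMOD D.Abar γ]) ∧
      a • ∑ s, q s • e s = ∑ u, ρ u • e u := by
  choose ρ hρ using fun s => D.mult γ s a
  refine ⟨∑ s, q s • ρ s, fun t => ?_, ?_⟩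
  · rw [col_apply, map_sum, Finset.mul_sum]
    refine SModEq.sum fun s _ => ?_
    rw [mul_smul_comm, map_smul, col_apply]
    exact (SModEq.sub_mem.2 (hρ s t)).smul _
  · rw [← Fintype.linearCombination_apply R e (∑ s, q s • ρ s), map_sum, Finset.smul_sum]
    refine Finset.sum_congr rfl fun s _ => ?_
    rw [map_smul, Fintype.linearCombination_apply, ← hM.2.2 a s (ρ s) (hρ s),
      ← algebraMap_smul A (q s) (e s), smul_smul, ← Algebra.commutes, mul_smul, algebraMap_smul]

lemma mul_col_of_smul_eq (hM : IsCellModule D γ M e) {a : A} {u : T γ}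
    (ha : a • ∑ s, p s • e s = e u) (t : T γ) :
    a * D.col γ t p ≡ D.c γ u t [SMOD D.Abar γ] := by
  obtain ⟨ρ, hρ, hact⟩ := exists_mul_col hM a p
  have hρu : ρ = Pi.single u 1 := by
    refine hM.1.fintypeLinearCombination_injective ?_
    rw [Fintype.linearCombination_apply, Fintype.linearCombination_apply_single, one_smul,
      ← hact, ha]
  simpa only [hρu, col_single] using hρ t

lemma mul_sum_col_congr {a : A} {ρ : T γ → R}
    (hy : y ≡ ∑ t, p t • D.col γ t p [SMOD D.Abar γ])
    (hρ : ∀ t, a * D.col γ t p ≡ D.col γ t ρ [SMOD D.Abar γ]) :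
    a * y ≡ ∑ t, p t • D.col γ t ρ [SMOD D.Abar γ] :=
  calc a * y ≡ a * ∑ t, p t • D.col γ t p [SMOD D.Abar γ] := mul_congr_left a hy
    _ ≡ ∑ t, p t • D.col γ t ρ [SMOD D.Abar γ] := by
      rw [Finset.mul_sum]
      refine SModEq.sum fun t _ => ?_
      rw [mul_smul_comm]
      exact (hρ t).smul _

lemma mul_lift_congr (hM : IsCellModule D γ M e)
    (hy : y ≡ ∑ t, p t • D.col γ t p [SMOD D.Abar γ])
    (hv : ∀ u, v u • ∑ s, p s • e s = e u) (u : T γ) :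
    v u * y ≡ ∑ t, p t • D.c γ u t [SMOD D.Abar γ] := by
  simpa only [col_single] using mul_sum_col_congr (ρ := Pi.single u 1) hy fun t => by
    simpa only [col_single] using mul_col_of_smul_eq hM (hv u) t

lemma exists_mul_lift_congr (hM : IsCellModule D γ M e)
    (hy : y ≡ ∑ t, p t • D.col γ t p [SMOD D.Abar γ])
    (hv : ∀ u, v u • ∑ s, p s • e s = e u) (a : A) :
    ∃ ρ : T γ → R, a * y ≡ ∑ u, ρ u • (v u * y) [SMOD D.Abar γ] := by
  obtain ⟨ρ, hρ, -⟩ := exists_mul_col hM a p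
  refine ⟨ρ, ?_⟩
  calc a * y ≡ ∑ t, p t • D.col γ t ρ [SMOD D.Abar γ] := mul_sum_col_congr hy hρ
    _ = ∑ u, ρ u • ∑ t, p t • D.c γ u t := by
      simp only [col_apply, Finset.smul_sum, smul_smul, mul_comm]
      exact Finset.sum_comm
    _ ≡ ∑ u, ρ u • (v u * y) [SMOD D.Abar γ] :=
      SModEq.sum fun u _ => ((mul_lift_congr hM hy hv u).symm).smul _

lemma star_lift_congr (hy : y ≡ ∑ t, p t • D.col γ t p [SMOD D.Abar γ]) :
    D.star y ≡ y [SMOD D.Abar γ] :=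
  calc D.star y ≡ D.star (∑ t, p t • D.col γ t p) [SMOD D.Abar γ] := star_congr hy
    _ = ∑ t : T γ, ∑ s : T γ, (p t * p s) • D.star (D.c γ s t) := by
      simp only [col_apply, map_sum, map_smul, Finset.smul_sum, smul_smul]
    _ ≡ ∑ t : T γ, ∑ s : T γ, (p t * p s) • D.c γ t s [SMOD D.Abar γ] :=
      SModEq.sum fun t _ => SModEq.sum fun s _ => (star_c_congr s t).smul _
    _ = ∑ t, p t • D.col γ t p := by
      rw [Finset.sum_comm]
      simp only [col_apply, Finset.smul_sum, smul_smul, mul_comm]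
    _ ≡ y [SMOD D.Abar γ] := hy.symm

lemma c_congr_mul_lift_mul_star (hM : IsCellModule D γ M e)
    (hy : y ≡ ∑ t, p t • D.col γ t p [SMOD D.Abar γ])
    (hv : ∀ u, v u • ∑ s, p s • e s = e u) (s t : T γ) :
    D.c γ s t ≡ v s * y * D.star (v t) [SMOD D.Abar γ] := by
  symm
  calc v s * y * D.star (v t)
      ≡ (∑ u, p u • D.c γ s u) * D.star (v t) [SMOD D.Abar γ] :=
        mul_congr_right _ (mul_lift_congr hM hy hv s)
    _ ≡ D.star (D.col γ s p) * D.star (v t) [SMOD D.Abar γ] := by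
        refine mul_congr_right _ ?_
        simp only [col_apply, map_sum, map_smul]
        exact SModEq.sum fun u _ => (star_c_congr u s).symm.smul _
    _ = D.star (v t * D.col γ s p) := (D.star_mul _ _).symm
    _ ≡ D.star (D.c γ t s) [SMOD D.Abar γ] := star_congr (mul_col_of_smul_eq hM (hv t) s)
    _ ≡ D.c γ s t [SMOD D.Abar γ] := star_c_congr t s

end CellModule

section Lifts

variable {y : Γ → A} {vv : ∀ γ, T γ → A}

lemma c_mem_of_forall_mul_mem [WellFoundedGT Γ]
    (hc : ∀ γ (s t : T γ), D.c γ s t ≡ vv γ s * y γ * D.star (vv γ t) [SMOD D.Abar γ])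
    (γ : Γ) (s t : T γ) {P : Submodule R A}
    (hP : ∀ (μ : Γ) (u w : A), γ ≤ μ → u * y μ * w ∈ P) : D.c γ s t ∈ P := by
  induction γ using WellFoundedGT.induction with
  | ind γ ih =>
    have hAbar : D.Abar γ ≤ P := Submodule.span_le.2 fun x ⟨μ, hμ, u, w, hx⟩ =>
      hx ▸ ih μ hμ u w fun ν u' w' h => hP ν u' w' (hμ.le.trans h)
    exact (Submodule.sub_mem_iff_left _ (hP γ _ _ le_rfl)).1
      (hAbar (SModEq.sub_mem.1 (hc γ s t)))

lemma isCyclicCellular [WellFoundedGT Γ]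
    {M : Γ → Type*} [∀ γ, AddCommGroup (M γ)] [∀ γ, Module R (M γ)]
    [∀ γ, Module A (M γ)] [∀ γ, IsScalarTower R A (M γ)] {e : ∀ γ, T γ → M γ}
    {p : ∀ γ, T γ → R} (hM : ∀ γ, IsCellModule D γ (M γ) (e γ))
    (hy : ∀ γ, y γ ≡ ∑ t, p γ t • D.col γ t (p γ) [SMOD D.Abar γ])
    (hv : ∀ γ (u : T γ), vv γ u • ∑ s, p γ s • e γ s = e γ u) :
    IsCyclicCellular D.star y vv := by
  have hc γ (s t : T γ) := c_congr_mul_lift_mul_star (hM γ) (hy γ) (hv γ) s t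
  have hAbar γ : D.Abar γ ≤ aboveIdeal R y γ := Submodule.span_le.2 fun x ⟨μ, hμ, u, w, hx⟩ =>
    hx ▸ c_mem_of_forall_mul_mem hc μ u w fun ν u' w' h =>
      Submodule.subset_span ⟨ν, u', w', hμ.trans_le h, rfl⟩
  refine ⟨fun γ => (star_lift_congr (hy γ)).mono (hAbar γ), fun γ a => ?_, ?_⟩
  · obtain ⟨ρ, hρ⟩ := exists_mul_lift_congr (hM γ) (hy γ) (hv γ) a
    exact ⟨_, Submodule.sum_mem _ fun u _ =>
      Submodule.smul_mem _ _ (Submodule.subset_span ⟨u, rfl⟩), hρ.mono (hAbar γ)⟩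
  · rw [eq_top_iff, ← D.span_top, Submodule.span_le]
    rintro _ ⟨⟨γ, s, t⟩, rfl⟩
    exact c_mem_of_forall_mul_mem hc γ s t fun μ u w _ => Submodule.subset_span ⟨μ, u, w, rfl⟩

end Lifts

end CellDatum

/-! ### The wreath product -/

lemma multilinearMap_mem_of_forall_mem_span {R ι : Type*} [CommRing R] [Finite ι] {E : ι → Type*}
    {N : Type*} [∀ i, AddCommGroup (E i)] [∀ i, Module R (E i)] [AddCommGroup N] [Module R N]
    {g : MultilinearMap R E N} {S : ∀ i, Set (E i)} {P : Submodule R N}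
    (h : ∀ s : ∀ i, E i, (∀ i, s i ∈ S i) → g s ∈ P) {a : ∀ i, E i}
    (ha : ∀ i, a i ∈ Submodule.span R (S i)) : g a ∈ P := by
  cases nonempty_fintype ι
  have key (Z : Finset ι) : ∀ a : ∀ i, E i, (∀ i ∈ Z, a i ∈ Submodule.span R (S i)) →
      (∀ i ∉ Z, a i ∈ S i) → g a ∈ P := by
    induction Z using Finset.induction_on with
    | empty => exact fun a _ hS => h a fun i => hS i (Finset.notMem_empty i)
    | insert i Z hi ih =>
      intro a hspan hS
      have hi_mem : Submodule.span R (S i) ≤ P.comap (g.toLinearMap a i) := by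
        refine Submodule.span_le.2 fun x hx => ih _ (fun j hj => ?_) fun j hj => ?_
        · rw [Function.update_of_ne (ne_of_mem_of_not_mem hj hi)]
          exact hspan j (Finset.mem_insert_of_mem hj)
        · rcases eq_or_ne j i with rfl | hji
          · rwa [Function.update_self]
          · rw [Function.update_of_ne hji]
            exact hS j (by simp [hji, hj])
      simpa using hi_mem (hspan i (Finset.mem_insert_self _ _))
  exact key Finset.univ a (fun i _ => ha i) (by simp)

section Wreath

variable {R : Type*} [CommRing R] {A : Type*} [Ring A] [Algebra R A]
  {n : ℕ} {W : Type*} [Ring W] [Algebra R W]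

/-- `W` carries, via `φ`, the multiplication of the crossed product of `A^{⊗n}` by `𝔖_n`. -/
structure IsWreathProduct
    (φ : ((⨂[R] _ : Fin n, A) ⊗[R] (Equiv.Perm (Fin n) →₀ R)) ≃ₗ[R] W) : Prop where
  one : wm φ (fun _ => (1 : A)) 1 = 1
  mul : ∀ (a b : Fin n → A) (π σ : Equiv.Perm (Fin n)),
    wm φ a π * wm φ b σ = wm φ (fun i => a i * b (π⁻¹ i)) (π * σ)

/-- `starW` is the map induced on the wreath product by the map `star` of `A`. -/
def IsWreathStar
    (φ : ((⨂[R] _ : Fin n, A) ⊗[R] (Equiv.Perm (Fin n) →₀ R)) ≃ₗ[R] W)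
    (star : A →ₗ[R] A) (starW : W →ₗ[R] W) : Prop :=
  ∀ (a : Fin n → A) (π : Equiv.Perm (Fin n)),
    starW (wm φ a π) = wm φ (fun i => star (a (π i))) π⁻¹

/-- The simple tensors `(a₁ ⊗ ⋯ ⊗ aₙ) π` as a multilinear map in `a`. -/
noncomputable def wmMultilinear
    (φ : ((⨂[R] _ : Fin n, A) ⊗[R] (Equiv.Perm (Fin n) →₀ R)) ≃ₗ[R] W)
    (π : Equiv.Perm (Fin n)) : MultilinearMap R (fun _ : Fin n => A) W :=
  (φ.toLinearMap ∘ₗ (TensorProduct.mk R _ _).flip (Finsupp.single π 1)).compMultilinearMap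
    (PiTensorProduct.tprod R)

/-- The sum of a set of permutations inside the wreath product. -/
noncomputable def permSum
    (φ : ((⨂[R] _ : Fin n, A) ⊗[R] (Equiv.Perm (Fin n) →₀ R)) ≃ₗ[R] W)
    (Ω : Finset (Equiv.Perm (Fin n))) : W :=
  ∑ σ ∈ Ω, sElt φ σ

variable {φ : ((⨂[R] _ : Fin n, A) ⊗[R] (Equiv.Perm (Fin n) →₀ R)) ≃ₗ[R] W}
  {star : A →ₗ[R] A} {starW : W →ₗ[R] W}

lemma wmMultilinear_apply (π : Equiv.Perm (Fin n)) (a : Fin n → A) :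
    wmMultilinear φ π a = wm φ a π :=
  rfl

lemma span_range_wm : Submodule.span R
    (Set.range fun x : (Fin n → A) × Equiv.Perm (Fin n) => wm φ x.1 x.2) = ⊤ := by
  refine Submodule.eq_top_iff'.2 fun w => ?_
  obtain ⟨x, rfl⟩ := φ.surjective w
  induction x using TensorProduct.induction_on with
  | zero => simp
  | add x y hx hy => rw [map_add]; exact add_mem hx hy
  | tmul x y =>
    induction y using Finsupp.induction_linear with
    | zero => simp
    | add f g hf hg => rw [TensorProduct.tmul_add, map_add]; exact add_mem hf hg
    | single π c =>
      induction x using PiTensorProduct.induction_on with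
      | smul_tprod k a =>
        rw [← mul_one c, ← smul_eq_mul, ← Finsupp.smul_single, TensorProduct.tmul_smul,
          map_smul, ← TensorProduct.smul_tmul', map_smul]
        exact Submodule.smul_mem _ _ (Submodule.smul_mem _ _
          (Submodule.subset_span ⟨(a, π), rfl⟩))
      | add x y hx hy => rw [TensorProduct.add_tmul, map_add]; exact add_mem hx hy

@[elab_as_elim]
lemma wm_induction {motive : W → Prop} (w : W) (wm : ∀ a π, motive (wm φ a π))
    (zero : motive 0) (add : ∀ x z, motive x → motive z → motive (x + z))
    (smul : ∀ (c : R) x, motive x → motive (c • x)) : motive w := by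
  have hw : w ∈ Submodule.span R
      (Set.range fun x : (Fin n → A) × Equiv.Perm (Fin n) => _root_.wm φ x.1 x.2) := by
    rw [span_range_wm]; trivial
  induction hw using Submodule.span_induction with
  | mem x h => obtain ⟨⟨a, π⟩, rfl⟩ := h; exact wm a π
  | zero => exact zero
  | add x z _ _ hx hz => exact add x z hx hz
  | smul c x _ hx => exact smul c x hx

namespace IsWreathProduct

variable (hφ : IsWreathProduct φ)
include hφ

lemma sElt_mul_sElt (π σ : Equiv.Perm (Fin n)) : sElt φ π * sElt φ σ = sElt φ (π * σ) := by
  simp [sElt, hφ.mul]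

lemma sElt_mul_sElt_inv (π : Equiv.Perm (Fin n)) : sElt φ π * sElt φ π⁻¹ = 1 := by
  rw [hφ.sElt_mul_sElt, mul_inv_cancel]
  exact hφ.one

lemma wm_mul_sElt (a : Fin n → A) (π σ : Equiv.Perm (Fin n)) :
    wm φ a π * sElt φ σ = wm φ a (π * σ) := by
  simp [sElt, hφ.mul]

lemma wm_one_mul_wm_one (a b : Fin n → A) :
    wm φ a 1 * wm φ b 1 = wm φ (fun i => a i * b i) 1 := by
  simp [hφ.mul]

lemma sElt_mul_wm (π : Equiv.Perm (Fin n)) (b : Fin n → A) :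
    sElt φ π * wm φ b 1 = wm φ (fun i => b (π⁻¹ i)) 1 * sElt φ π := by
  simp [sElt, hφ.mul]

lemma isAntiInvolution (hstar : IsAntiInvolution star) (hsw : IsWreathStar φ star starW) :
    IsAntiInvolution starW where
  map_mul x z := by
    induction x using wm_induction (φ := φ) with
    | wm a π =>
      induction z using wm_induction (φ := φ) with
      | wm b σ => simp [hφ.mul, hsw _ _, hstar.map_mul]
      | zero => simp
      | add z z' h h' => simp [add_mul, mul_add, h, h']
      | smul c z h => simp [h]
    | zero => simp
    | add x x' h h' => simp [add_mul, mul_add, h, h']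
    | smul c x h => simp [h]
  apply_apply x := by
    induction x using wm_induction (φ := φ) with
    | wm a π => simp [hsw _ _, hstar.apply_apply]
    | zero => simp
    | add x x' h h' => simp [h, h']
    | smul c x h => simp [h]

end IsWreathProduct

lemma IsAntiInvolution.map_one (hstar : IsAntiInvolution star) : star 1 = 1 := by
  simpa [hstar.apply_apply] using (hstar.map_mul 1 (star 1)).symm

lemma IsWreathStar.map_sElt (hsw : IsWreathStar φ star starW) (hstar : IsAntiInvolution star)
    (σ : Equiv.Perm (Fin n)) : starW (sElt φ σ) = sElt φ σ⁻¹ := by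
  simp [sElt, hsw _ _, hstar.map_one]

end Wreath

/-! ### Row functions and dominance -/

section FiberPerms

variable {ι α : Type*} [Fintype ι] {f : ι → α} {σ τ : Equiv.Perm ι}

/-- The permutations preserving the fibres of `f`: the row stabilizer, when `f` sends every
position to its row. -/
noncomputable def fiberPerms (f : ι → α) : Finset (Equiv.Perm ι) :=
  Finset.univ.filter fun σ => ∀ i, f (σ i) = f i

lemma mem_fiberPerms : σ ∈ fiberPerms f ↔ ∀ i, f (σ i) = f i := by
  simp [fiberPerms]

lemma inv_mem_fiberPerms (h : σ ∈ fiberPerms f) : σ⁻¹ ∈ fiberPerms f :=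
  mem_fiberPerms.2 fun i => by simpa using (mem_fiberPerms.1 h (σ⁻¹ i)).symm

lemma mul_mem_fiberPerms (h : σ ∈ fiberPerms f) (h' : τ ∈ fiberPerms f) :
    σ * τ ∈ fiberPerms f :=
  mem_fiberPerms.2 fun i => (mem_fiberPerms.1 h _).trans (mem_fiberPerms.1 h' i)

end FiberPerms

section Dominance

variable {ι Γ : Type*} [Fintype ι] [PartialOrder Γ] {f g h : ι → Γ × ℕ} {γ : Γ} {J : Finset ℕ}
  {m : ι}

/-- The positions whose component under the row function `f` lies strictly above `γ`, or is `γ`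
with row in `J`. -/
noncomputable def domSet (f : ι → Γ × ℕ) (γ : Γ) (J : Finset ℕ) : Finset ι :=
  Finset.univ.filter fun m => γ < (f m).1 ∨ ((f m).1 = γ ∧ (f m).2 ∈ J)

lemma mem_domSet : m ∈ domSet f γ J ↔ γ < (f m).1 ∨ ((f m).1 = γ ∧ (f m).2 ∈ J) := by
  simp [domSet]

/-- Dominance of row functions `ι → Γ × ℕ`, which send a position to its component and row. The
rows need not be sorted by length, so the first `|J|` rows become `|J|` rows of our choice. -/
def Dominates (g f : ι → Γ × ℕ) : Prop :=
  ∀ γ J, ∃ J' : Finset ℕ, J'.card ≤ J.card ∧ (domSet f γ J).card ≤ (domSet g γ J').card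

/-- Strict dominance of row functions. -/
def StrictlyDominates (g f : ι → Γ × ℕ) : Prop :=
  Dominates g f ∧ ¬ Dominates f g

lemma Dominates.trans (hhg : Dominates h g) (hgf : Dominates g f) : Dominates h f := fun γ J => by
  obtain ⟨J', hJ', hc'⟩ := hgf γ J
  obtain ⟨J'', hJ'', hc''⟩ := hhg γ J'
  exact ⟨J'', hJ''.trans hJ', hc'.trans hc''⟩

lemma StrictlyDominates.trans_dominates (hhg : StrictlyDominates h g) (hgf : Dominates g f) :
    StrictlyDominates h f :=
  ⟨hhg.1.trans hgf, fun hfh => hhg.2 (hgf.trans hfh)⟩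

lemma card_domSet_comp (f : ι → Γ × ℕ) (ρ : Equiv.Perm ι) (γ : Γ) (J : Finset ℕ) :
    (domSet (f ∘ ρ) γ J).card = (domSet f γ J).card :=
  Finset.card_equiv ρ fun m => by simp only [mem_domSet, Function.comp_apply]

lemma dominates_comp (f : ι → Γ × ℕ) (ρ : Equiv.Perm ι) : Dominates (f ∘ ρ) f :=
  fun γ J => ⟨J, le_rfl, (card_domSet_comp f ρ γ J).ge⟩

lemma comp_dominates (f : ι → Γ × ℕ) (ρ : Equiv.Perm ι) : Dominates f (f ∘ ρ) :=
  fun γ J => ⟨J, le_rfl, (card_domSet_comp f ρ γ J).le⟩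

end Dominance

section RowElements

variable {R : Type*} [CommRing R] {A : Type*} [Ring A] [Algebra R A]
  {n : ℕ} {W : Type*} [Ring W] [Algebra R W] {Γ : Type*}

/-- The element `y^α x_λ` attached to a row function. -/
noncomputable def rowElt (φ : ((⨂[R] _ : Fin n, A) ⊗[R] (Equiv.Perm (Fin n) →₀ R)) ≃ₗ[R] W)
    (y : Γ → A) (f : Fin n → Γ × ℕ) : W :=
  wm φ (fun i => y (f i).1) 1 * permSum φ (fiberPerms f)

/-- The two-sided ideal generated by the elements attached to the row functions which strictly
dominate `f`. -/
noncomputable def domIdeal [PartialOrder Γ]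
    (φ : ((⨂[R] _ : Fin n, A) ⊗[R] (Equiv.Perm (Fin n) →₀ R)) ≃ₗ[R] W)
    (y : Γ → A) (f : Fin n → Γ × ℕ) : Submodule R W :=
  Submodule.span R {x | ∃ (g : Fin n → Γ × ℕ) (a b : W),
    StrictlyDominates g f ∧ x = a * rowElt φ y g * b}

variable {φ : ((⨂[R] _ : Fin n, A) ⊗[R] (Equiv.Perm (Fin n) →₀ R)) ≃ₗ[R] W} {y : Γ → A}
  {f g : Fin n → Γ × ℕ} {x z : W}

lemma rowElt_congr (hcomp : ∀ i, (f i).1 = (g i).1) (hfib : ∀ i j, f i = f j ↔ g i = g j) :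
    rowElt φ y f = rowElt φ y g := by
  have : fiberPerms f = fiberPerms g := by ext σ; simp [mem_fiberPerms, hfib]
  simp [rowElt, hcomp, this]

section DomIdeal

variable [PartialOrder Γ]

lemma mul_rowElt_mul_mem_domIdeal (h : StrictlyDominates g f) (a b : W) :
    a * rowElt φ y g * b ∈ domIdeal φ y f :=
  Submodule.subset_span ⟨g, a, b, h, rfl⟩

lemma mul_mem_domIdeal (a : W) (hx : x ∈ domIdeal φ y f) : a * x ∈ domIdeal φ y f := by
  induction hx using Submodule.span_induction with
  | mem x h =>
    obtain ⟨g, a', b, hg, rfl⟩ := h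
    rw [mul_assoc a', ← mul_assoc, ← mul_assoc]
    exact mul_rowElt_mul_mem_domIdeal hg _ _
  | zero => simp
  | add x z _ _ hx hz => rw [mul_add]; exact add_mem hx hz
  | smul c x _ hx => rw [mul_smul_comm]; exact Submodule.smul_mem _ _ hx

lemma mem_domIdeal_mul (hx : x ∈ domIdeal φ y f) (a : W) : x * a ∈ domIdeal φ y f := by
  induction hx using Submodule.span_induction with
  | mem x h =>
    obtain ⟨g, a', b, hg, rfl⟩ := h
    rw [mul_assoc]
    exact mul_rowElt_mul_mem_domIdeal hg _ _
  | zero => simp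
  | add x z _ _ hx hz => rw [add_mul]; exact add_mem hx hz
  | smul c x _ hx => rw [smul_mul_assoc]; exact Submodule.smul_mem _ _ hx

lemma mul_congr_domIdeal_left (a : W) (h : x ≡ z [SMOD domIdeal φ y f]) :
    a * x ≡ a * z [SMOD domIdeal φ y f] := by
  rw [SModEq.sub_mem] at h ⊢
  rw [← mul_sub]
  exact mul_mem_domIdeal a h

lemma mul_congr_domIdeal_right (h : x ≡ z [SMOD domIdeal φ y f]) (a : W) :
    x * a ≡ z * a [SMOD domIdeal φ y f] := by
  rw [SModEq.sub_mem] at h ⊢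
  rw [← sub_mul]
  exact mem_domIdeal_mul h a

lemma domIdeal_le (h : Dominates g f) : domIdeal φ y g ≤ domIdeal φ y f :=
  Submodule.span_mono fun _ ⟨g', a, b, h', hx⟩ => ⟨g', a, b, h'.trans_dominates h, hx⟩

end DomIdeal

namespace IsWreathProduct

variable (hφ : IsWreathProduct φ)
include hφ

lemma sElt_mul_permSum_fiberPerms {α : Type*} (f : Fin n → α) (ρ : Equiv.Perm (Fin n)) :
    sElt φ ρ * permSum φ (fiberPerms f) = permSum φ (fiberPerms (f ∘ ⇑ρ⁻¹)) * sElt φ ρ := by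
  simp only [permSum, Finset.sum_mul, Finset.mul_sum, hφ.sElt_mul_sElt]
  refine Finset.sum_equiv (MulAut.conj ρ).toEquiv (fun τ => ?_) fun τ _ => ?_
  · simp only [mem_fiberPerms, MulEquiv.toEquiv_eq_coe, EquivLike.coe_coe, MulAut.conj_apply]
    exact ⟨fun h i => by simpa using h (ρ⁻¹ i), fun h i => by simpa using h (ρ i)⟩
  · simp

lemma sElt_mul_rowElt (f : Fin n → Γ × ℕ) (ρ : Equiv.Perm (Fin n)) :
    sElt φ ρ * rowElt φ y f = rowElt φ y (f ∘ ⇑ρ⁻¹) * sElt φ ρ := by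
  rw [rowElt, ← mul_assoc, hφ.sElt_mul_wm, mul_assoc, hφ.sElt_mul_permSum_fiberPerms, ← mul_assoc]
  rfl

lemma permSum_fiberPerms_mul_wm {α : Type*} {f : Fin n → α} {a : Fin n → A}
    (ha : ∀ σ ∈ fiberPerms f, ∀ i, a (σ i) = a i) :
    permSum φ (fiberPerms f) * wm φ a 1 = wm φ a 1 * permSum φ (fiberPerms f) := by
  simp only [permSum, Finset.sum_mul, Finset.mul_sum]
  refine Finset.sum_congr rfl fun σ hσ => ?_
  rw [hφ.sElt_mul_wm]
  simp only [ha _ (inv_mem_fiberPerms hσ)]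

/-- A set of permutations stable under left multiplication by the row stabilizer is a union of
right cosets, and the coset of `ω` is determined by `f ∘ ω`. -/
lemma permSum_fiberPerms_dvd {α : Type*} (f : Fin n → α) (Ω : Finset (Equiv.Perm (Fin n)))
    (hΩ : ∀ σ ∈ fiberPerms f, ∀ ω ∈ Ω, σ * ω ∈ Ω) :
    permSum φ (fiberPerms f) ∣ permSum φ Ω := by
  have hmem {τ ω : Equiv.Perm (Fin n)} : τ * ω⁻¹ ∈ fiberPerms f ↔ f ∘ ⇑τ = f ∘ ⇑ω := by
    simp only [funext_iff, mem_fiberPerms, Function.comp_apply, Equiv.Perm.mul_apply]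
    exact ⟨fun h i => by simpa using h (ω i), fun h i => by simpa using h (ω⁻¹ i)⟩
  have hcoset : ∀ ω ∈ Ω, ∑ τ ∈ Ω.filter (fun τ : Equiv.Perm (Fin n) => f ∘ ⇑τ = f ∘ ⇑ω), sElt φ τ =
      permSum φ (fiberPerms f) * sElt φ ω := fun ω hω => by
    rw [permSum, Finset.sum_mul]
    refine Finset.sum_equiv (Equiv.mulRight ω⁻¹) (fun τ => ?_) fun τ _ => ?_
    · rw [Finset.mem_filter, ← hmem, Equiv.coe_mulRight, and_iff_right_iff_imp]
      intro h
      simpa using hΩ _ h ω hω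
    · simp [hφ.sElt_mul_sElt]
  rw [permSum.eq_1 φ Ω, ← Finset.sum_fiberwise_of_maps_to
    fun ω hω => Finset.mem_image_of_mem (fun ω : Equiv.Perm (Fin n) => f ∘ ⇑ω) hω]
  refine Finset.dvd_sum fun k hk => ?_
  obtain ⟨ω, hω, rfl⟩ := Finset.mem_image.1 hk
  exact ⟨_, hcoset ω hω⟩

lemma permSum_fiberPerms_dvd_of_subset {α β : Type*} {f : Fin n → α} {g : Fin n → β}
    (h : fiberPerms g ⊆ fiberPerms f) : permSum φ (fiberPerms g) ∣ permSum φ (fiberPerms f) :=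
  hφ.permSum_fiberPerms_dvd g _ fun _ hσ _ hω => mul_mem_fiberPerms (h hσ) hω

end IsWreathProduct

end RowElements

/-! ### Straightening of tensors -/

section FreshRows

variable {ι α : Type*} [Fintype ι] {f q : ι → α} {Z : Finset ι} [∀ j, Decidable (j ∈ Z)]
  {σ : Equiv.Perm ι} {i : ι}

lemma apply_eq_of_mem_fiberPerms_piecewise (hq : Function.Injective q) (hfq : ∀ i j, f i ≠ q j)
    (hσ : σ ∈ fiberPerms (Z.piecewise q f)) (hi : i ∈ Z) : σ i = i := by
  have h := mem_fiberPerms.1 hσ i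
  rw [Finset.piecewise_eq_of_mem _ _ _ hi] at h
  by_cases hσi : σ i ∈ Z
  · rw [Finset.piecewise_eq_of_mem _ _ _ hσi] at h
    exact hq h
  · rw [Finset.piecewise_eq_of_notMem _ _ _ hσi] at h
    exact absurd h (hfq _ _)

lemma apply_mem_iff_of_mem_fiberPerms_piecewise (hq : Function.Injective q)
    (hfq : ∀ i j, f i ≠ q j) (hσ : σ ∈ fiberPerms (Z.piecewise q f)) : σ i ∈ Z ↔ i ∈ Z := by
  refine ⟨fun h => ?_, fun h => ?_⟩
  · rwa [σ.injective (apply_eq_of_mem_fiberPerms_piecewise hq hfq hσ h)] at h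
  · rwa [apply_eq_of_mem_fiberPerms_piecewise hq hfq hσ h]

lemma fiberPerms_piecewise_subset (hq : Function.Injective q) (hfq : ∀ i j, f i ≠ q j) :
    fiberPerms (Z.piecewise q f) ⊆ fiberPerms f := fun σ hσ => mem_fiberPerms.2 fun i => by
  by_cases hi : i ∈ Z
  · rw [apply_eq_of_mem_fiberPerms_piecewise hq hfq hσ hi]
  · have hσi := (apply_mem_iff_of_mem_fiberPerms_piecewise hq hfq hσ).not.2 hi
    simpa only [Finset.piecewise_eq_of_notMem _ _ _ hi, Finset.piecewise_eq_of_notMem _ _ _ hσi]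
      using mem_fiberPerms.1 hσ i

lemma exists_fresh_rows {n : ℕ} {Γ : Type*} (f : Fin n → Γ × ℕ) (β : Fin n → Γ) :
    ∃ q : Fin n → Γ × ℕ, Function.Injective q ∧ (∀ i j, f i ≠ q j) ∧ ∀ i, (q i).1 = β i := by
  obtain ⟨N, hN⟩ := Finite.exists_le fun i => (f i).2
  refine ⟨fun i => (β i, N + 1 + i), fun i j h => ?_, fun i j h => ?_, fun i => rfl⟩
  · have := congrArg Prod.snd h
    exact Fin.ext (by simpa using this)
  · have := congrArg Prod.snd h
    have := hN i
    simp_all only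
    omega

lemma strictlyDominates_piecewise {Γ : Type*} [PartialOrder Γ] {f q : ι → Γ × ℕ}
    (hZ : Z.Nonempty) (hlt : ∀ i ∈ Z, (f i).1 < (q i).1) :
    StrictlyDominates (Z.piecewise q f) f := by
  have hsub γ J : domSet f γ J ⊆ domSet (Z.piecewise q f) γ J := fun m hm => by
    rw [mem_domSet] at hm ⊢
    by_cases hmZ : m ∈ Z
    · rw [Finset.piecewise_eq_of_mem _ _ _ hmZ]
      exact Or.inl (hm.elim (·.trans (hlt m hmZ)) fun h => h.1 ▸ hlt m hmZ)
    · rwa [Finset.piecewise_eq_of_notMem _ _ _ hmZ]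
  refine ⟨fun γ J => ⟨J, le_rfl, Finset.card_le_card (hsub γ J)⟩, fun hd => ?_⟩
  obtain ⟨i₀, hi₀⟩ := hZ
  obtain ⟨J', hJ', hle⟩ := hd (f i₀).1 ∅
  obtain rfl : J' = ∅ := by simpa using hJ'
  refine hle.not_gt (Finset.card_lt_card ⟨hsub _ _, fun h => ?_⟩)
  have := @h i₀ (by simp [mem_domSet, Finset.piecewise_eq_of_mem _ _ _ hi₀, hlt i₀ hi₀])
  simp [mem_domSet] at this

end FreshRows

/-- The left ideal `A y_γ + Ā^γ`. -/
def leftIdeal (R : Type*) [CommRing R] {A : Type*} [Ring A] [Algebra R A] {Γ : Type*}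
    [PartialOrder Γ] (y : Γ → A) (γ : Γ) : Submodule R A :=
  Submodule.span R ({x | ∃ u : A, x = u * y γ} ∪
    {x | ∃ (μ : Γ) (u w : A), γ < μ ∧ x = u * y μ * w})

section Straightening

variable {R : Type*} [CommRing R] {A : Type*} [Ring A] [Algebra R A]
  {n : ℕ} {W : Type*} [Ring W] [Algebra R W]
  {φ : ((⨂[R] _ : Fin n, A) ⊗[R] (Equiv.Perm (Fin n) →₀ R)) ≃ₗ[R] W}
  {Γ : Type*} [PartialOrder Γ] {T : Γ → Type*}
  {star : A →ₗ[R] A} {starW : W →ₗ[R] W} {y : Γ → A} {vv : ∀ γ, T γ → A} {f : Fin n → Γ × ℕ}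

lemma aboveIdeal_le_leftIdeal (γ : Γ) : aboveIdeal R y γ ≤ leftIdeal R y γ :=
  Submodule.span_mono Set.subset_union_right

lemma mul_mem_leftIdeal (γ : Γ) (u : A) : u * y γ ∈ leftIdeal R y γ :=
  Submodule.subset_span (Or.inl ⟨u, rfl⟩)

lemma IsWreathStar.map_permSum_fiberPerms (hsw : IsWreathStar φ star starW)
    (hstar : IsAntiInvolution star) {α : Type*} (f : Fin n → α) :
    starW (permSum φ (fiberPerms f)) = permSum φ (fiberPerms f) := by
  simp only [permSum, map_sum, hsw.map_sElt hstar]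
  exact Finset.sum_equiv (Equiv.inv _)
    (fun σ => ⟨inv_mem_fiberPerms, fun h => inv_inv σ ▸ inv_mem_fiberPerms h⟩) (by simp)

namespace IsWreathProduct

variable (hφ : IsWreathProduct φ)
include hφ

/-- Giving each raised position a row of its own, the stabilizer of the new row function fixes the
raised positions, so that it commutes with the right factors `w i`. -/
lemma wm_mul_permSum_mem_of_lt {u w : Fin n → A} {β : Fin n → Γ}
    (hβ : ∀ i, (f i).1 < β i ∨ β i = (f i).1 ∧ w i = 1) (hlt : ∃ i, (f i).1 < β i) :
    wm φ (fun i => u i * y (β i) * w i) 1 * permSum φ (fiberPerms f) ∈ domIdeal φ y f := by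
  obtain ⟨q, hq, hfq, hqβ⟩ := exists_fresh_rows f β
  set Z : Finset (Fin n) := Finset.univ.filter fun i => (f i).1 < β i with hZ
  have hmem {i} : i ∈ Z ↔ (f i).1 < β i := by simp [hZ]
  have hout {i} (hi : i ∉ Z) : β i = (f i).1 ∧ w i = 1 := (hβ i).resolve_left (hmem.not.1 hi)
  obtain ⟨z, hz⟩ := hφ.permSum_fiberPerms_dvd_of_subset
    (fiberPerms_piecewise_subset (Z := Z) hq hfq)
  have hcomm : permSum φ (fiberPerms (Z.piecewise q f)) * wm φ w 1 =
      wm φ w 1 * permSum φ (fiberPerms (Z.piecewise q f)) := by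
    refine hφ.permSum_fiberPerms_mul_wm fun σ hσ i => ?_
    by_cases hi : i ∈ Z
    · rw [apply_eq_of_mem_fiberPerms_piecewise hq hfq hσ hi]
    · rw [(hout hi).2, (hout ((apply_mem_iff_of_mem_fiberPerms_piecewise hq hfq hσ).not.2 hi)).2]
  have hcomponent : (fun i => y (β i)) = fun i => y (Z.piecewise q f i).1 := by
    funext i
    by_cases hi : i ∈ Z
    · rw [Finset.piecewise_eq_of_mem _ _ _ hi, hqβ]
    · rw [Finset.piecewise_eq_of_notMem _ _ _ hi, (hout hi).1]
  have hfactor : wm φ (fun i => u i * y (β i) * w i) 1 * permSum φ (fiberPerms f) =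
      wm φ u 1 * rowElt φ y (Z.piecewise q f) * (wm φ w 1 * z) := by
    rw [hz, ← hφ.wm_one_mul_wm_one (fun i => u i * y (β i)) w, ← hφ.wm_one_mul_wm_one u,
      hcomponent, rowElt]
    simp only [mul_assoc]
    rw [← mul_assoc _ (wm φ w 1) z, hcomm]
    simp only [mul_assoc]
  rw [hfactor]
  refine mul_rowElt_mul_mem_domIdeal (strictlyDominates_piecewise ?_ fun i hi => ?_) _ _
  · exact hlt.imp fun i => hmem.2
  · rw [hqβ]
    exact hmem.1 hi

lemma wm_mul_permSum_mem_domIdeal {a : Fin n → A} (ha : ∀ i, a i ∈ leftIdeal R y (f i).1)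
    {i₀ : Fin n} (hi₀ : a i₀ ∈ aboveIdeal R y (f i₀).1) :
    wm φ a 1 * permSum φ (fiberPerms f) ∈ domIdeal φ y f := by
  let S (i : Fin n) : Set A := {x | (i ≠ i₀ ∧ ∃ u : A, x = u * y (f i).1) ∨
    ∃ (μ : Γ) (u w : A), (f i).1 < μ ∧ x = u * y μ * w}
  refine multilinearMap_mem_of_forall_mem_span (S := S)
    (g := (LinearMap.mulRight R (permSum φ (fiberPerms f))).compMultilinearMap
      (wmMultilinear φ 1)) (fun s hs => ?_) fun i => ?_
  · have hform i : ∃ (β : Γ) (u w : A), s i = u * y β * w ∧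
        ((f i).1 < β ∨ i ≠ i₀ ∧ β = (f i).1 ∧ w = 1) := by
      rcases hs i with ⟨hi, u, hu⟩ | ⟨μ, u, w, hμ, hx⟩
      · exact ⟨_, u, 1, by rw [hu, mul_one], Or.inr ⟨hi, rfl, rfl⟩⟩
      · exact ⟨μ, u, w, hx, Or.inl hμ⟩
    choose β u w hs hβ using hform
    rw [funext hs]
    exact hφ.wm_mul_permSum_mem_of_lt (fun i => (hβ i).imp_right And.right)
      ⟨i₀, (hβ i₀).resolve_right fun h => h.1 rfl⟩
  · rcases eq_or_ne i i₀ with rfl | hi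
    · exact Submodule.span_mono (fun x hx => Or.inr hx) hi₀
    · exact Submodule.span_mono (fun x hx => hx.imp_left fun h => ⟨hi, h⟩) (ha i)

lemma wm_mul_permSum_congr {a b : Fin n → A} (hb : ∀ i, b i ∈ leftIdeal R y (f i).1)
    (hab : ∀ i, a i ≡ b i [SMOD aboveIdeal R y (f i).1]) :
    wm φ a 1 * permSum φ (fiberPerms f) ≡ wm φ b 1 * permSum φ (fiberPerms f)
      [SMOD domIdeal φ y f] := by
  have hsub i : a i - b i ∈ aboveIdeal R y (f i).1 := SModEq.sub_mem.1 (hab i)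
  have ha i : a i ∈ leftIdeal R y (f i).1 :=
    (Submodule.sub_mem_iff_left _ (hb i)).1 (aboveIdeal_le_leftIdeal _ (hsub i))
  have key (s : Finset (Fin n)) : wm φ (s.piecewise a b) 1 * permSum φ (fiberPerms f) ≡
      wm φ b 1 * permSum φ (fiberPerms f) [SMOD domIdeal φ y f] := by
    induction s using Finset.induction_on with
    | empty => rw [Finset.piecewise_empty]
    | insert i s hi ih =>
      refine SModEq.trans (SModEq.sub_mem.2 ?_) ih
      have hupdate : wm φ ((insert i s).piecewise a b) 1 - wm φ (s.piecewise a b) 1 =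
          wm φ (Function.update (s.piecewise a b) i (a i - b i)) 1 := by
        simp only [← wmMultilinear_apply, MultilinearMap.map_update_sub, Finset.piecewise_insert]
        rw [← Finset.piecewise_eq_of_notMem s a b hi, Function.update_eq_self]
      rw [← sub_mul, hupdate]
      refine hφ.wm_mul_permSum_mem_domIdeal (fun j => ?_) (i₀ := i) (by simpa using hsub i)
      rcases eq_or_ne j i with rfl | hj
      · simpa using aboveIdeal_le_leftIdeal _ (hsub j)
      · rw [Function.update_of_ne hj]
        by_cases hjs : j ∈ s
        · simpa [hjs] using ha j
        · simpa [hjs] using hb j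
  simpa using key Finset.univ

lemma wm_mul_rowElt_mem (hc : IsCyclicCellular star y vv) (f : Fin n → Γ × ℕ) (a : Fin n → A) :
    wm φ a 1 * rowElt φ y f ∈ Submodule.span R (Set.range fun τ : ∀ i, T (f i).1 =>
      wm φ (fun i => vv _ (τ i)) 1 * rowElt φ y f) ⊔ domIdeal φ y f := by
  choose b hb hab using fun i => hc.mul_y (f i).1 (a i)
  have hb' i : b i ∈ leftIdeal R y (f i).1 := by
    refine Submodule.span_le.2 ?_ (hb i)
    rintro _ ⟨t, rfl⟩
    exact mul_mem_leftIdeal _ _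
  have hspan : wm φ b 1 * permSum φ (fiberPerms f) ∈ Submodule.span R
      (Set.range fun τ : ∀ i, T (f i).1 => wm φ (fun i => vv _ (τ i)) 1 * rowElt φ y f) := by
    refine multilinearMap_mem_of_forall_mem_span
      (g := (LinearMap.mulRight R (permSum φ (fiberPerms f))).compMultilinearMap
        (wmMultilinear φ 1)) (fun s hs => ?_) hb
    choose τ hτ using hs
    refine Submodule.subset_span ⟨τ, ?_⟩
    simp only [rowElt]
    rw [← mul_assoc, hφ.wm_one_mul_wm_one]
    exact congrArg (fun s => wm φ s 1 * permSum φ (fiberPerms f)) (funext hτ)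
  rw [rowElt, ← mul_assoc, hφ.wm_one_mul_wm_one]
  exact (Submodule.sub_mem_iff_left _ (Submodule.mem_sup_left hspan)).1
    (Submodule.mem_sup_right (SModEq.sub_mem.1 (hφ.wm_mul_permSum_congr hb' hab)))

section Involution

variable (hstar : IsAntiInvolution star) (hsw : IsWreathStar φ star starW)
  (hc : IsCyclicCellular star y vv)
include hstar hsw hc

lemma starW_rowElt_congr (f : Fin n → Γ × ℕ) :
    starW (rowElt φ y f) ≡ rowElt φ y f [SMOD domIdeal φ y f] := by
  have hstarW : starW (rowElt φ y f) =
      wm φ (fun i => star (y (f i).1)) 1 * permSum φ (fiberPerms f) := by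
    rw [rowElt, (hφ.isAntiInvolution hstar hsw).map_mul, hsw.map_permSum_fiberPerms hstar, hsw]
    exact hφ.permSum_fiberPerms_mul_wm fun σ hσ i => by simp [mem_fiberPerms.1 hσ i]
  rw [hstarW]
  refine hφ.wm_mul_permSum_congr (fun i => ?_) fun i => hc.star_y _
  simpa using mul_mem_leftIdeal (R := R) (y := y) (f i).1 1

lemma starW_mem_domIdeal {x : W} (hx : x ∈ domIdeal φ y f) : starW x ∈ domIdeal φ y f := by
  have hanti := hφ.isAntiInvolution hstar hsw
  induction hx using Submodule.span_induction with
  | mem x h =>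
    obtain ⟨g, a, b, hg, rfl⟩ := h
    rw [hanti.map_mul, hanti.map_mul, ← mul_assoc]
    refine mem_domIdeal_mul (mul_mem_domIdeal _ ?_) _
    have hmem := mul_rowElt_mul_mem_domIdeal (φ := φ) (y := y) hg 1 1
    rw [one_mul, mul_one] at hmem
    exact (Submodule.sub_mem_iff_left _ hmem).1
      (domIdeal_le hg.1 (SModEq.sub_mem.1 (hφ.starW_rowElt_congr hstar hsw hc g)))
  | zero => simp
  | add x z _ _ hx hz => rw [map_add]; exact add_mem hx hz
  | smul c x _ hx => rw [map_smul]; exact Submodule.smul_mem _ _ hx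

end Involution

end IsWreathProduct

end Straightening

/-! ### Garnir relations -/

lemma sum_le_sum_range_card_of_antitone {F : ℕ → ℕ} (hF : Antitone F) (J : Finset ℕ) :
    ∑ a ∈ J, F a ≤ ∑ a ∈ Finset.range J.card, F a := by
  induction J using Finset.induction_on_max with
  | empty => simp
  | insert m s hs ih =>
    have hm : m ∉ s := fun h => lt_irrefl _ (hs m h)
    have hcard : s.card ≤ m := by
      simpa using Finset.card_le_card (t := Finset.range m) fun x hx => by simpa using hs x hx
    rw [Finset.sum_insert hm, Finset.card_insert_of_notMem hm, Finset.sum_range_succ, add_comm]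
    exact add_le_add ih (hF hcard)

section Redistribution

variable {ι Γ : Type*} {g g' : ι → Γ × ℕ} {γ : Γ} {i : ℕ} {P Q : Finset ι} {p : ι}

/-- Merges the rows `i` and `i + 1` of the component `γ` into row `i`, except for the positions in
`Q`, which are put into row `i + 1`. -/
noncomputable def mergeRows (g : ι → Γ × ℕ) (γ : Γ) (i : ℕ) (Q : Finset ι) (m : ι) : Γ × ℕ :=
  if m ∈ Q then (γ, i + 1) else if g m = (γ, i + 1) then (γ, i) else g m

lemma fst_mergeRows (hQ : ∀ m ∈ Q, g m = (γ, i) ∨ g m = (γ, i + 1)) (m : ι) :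
    (mergeRows g γ i Q m).1 = (g m).1 := by
  rw [mergeRows]
  split_ifs with hm hrow
  · rcases hQ m hm with h | h <;> rw [h]
  · rw [hrow]
  · rfl

/-- `g'` is obtained from `g` by redistributing the positions in the rows `i` and `i + 1` of the
component `γ` among these two rows, in such a way that `P` lands in the upper and `Q` in the lower
one. -/
structure IsGarnir (g : ι → Γ × ℕ) (γ : Γ) (i : ℕ) (P Q : Finset ι) (g' : ι → Γ × ℕ) : Prop where
  eq_of_ne : ∀ m, g m ≠ (γ, i) → g m ≠ (γ, i + 1) → g' m = g m
  eq_or_eq : ∀ m, g m = (γ, i) ∨ g m = (γ, i + 1) → g' m = (γ, i) ∨ g' m = (γ, i + 1)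
  eq_upper : ∀ m ∈ P, g' m = (γ, i)
  eq_lower : ∀ m ∈ Q, g' m = (γ, i + 1)

lemma IsGarnir.fst_eq (h : IsGarnir g γ i P Q g') (m : ι) : (g' m).1 = (g m).1 := by
  by_cases hm : g m = (γ, i) ∨ g m = (γ, i + 1)
  · rcases h.eq_or_eq m hm with h' | h' <;> rcases hm with hm | hm <;> rw [h', hm]
  · rw [not_or] at hm
    rw [h.eq_of_ne m hm.1 hm.2]

lemma isGarnir_empty_iff (hQ : ∀ m ∈ Q, g m = (γ, i) ∨ g m = (γ, i + 1)) :
    IsGarnir g γ i ∅ Q g' ↔ ∀ m, g' m = mergeRows g γ i Q m ∨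
      mergeRows g γ i Q m = (γ, i) ∧ g' m = (γ, i + 1) := by
  refine ⟨fun h m => ?_, fun h => ⟨fun m h₁ h₂ => ?_, fun m hm => ?_, by simp, fun m hm => ?_⟩⟩
  · have h₁ := h.eq_of_ne m
    have h₂ := h.eq_or_eq m
    have h₃ := h.eq_lower m
    grind [mergeRows]
  · grind [mergeRows]
  · grind [mergeRows]
  · grind [mergeRows]

lemma isGarnir_iff_insert [DecidableEq ι] (hp : g p = (γ, i) ∨ g p = (γ, i + 1)) :
    IsGarnir g γ i P Q g' ↔
      IsGarnir g γ i (insert p P) Q g' ∨ IsGarnir g γ i P (insert p Q) g' := by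
  refine ⟨fun h => (h.eq_or_eq p hp).imp (fun h' => ?_) fun h' => ?_, fun h => ?_⟩
  · exact { h with eq_upper := (Finset.forall_mem_insert _ _ _).2 ⟨h', h.eq_upper⟩ }
  · exact { h with eq_lower := (Finset.forall_mem_insert _ _ _).2 ⟨h', h.eq_lower⟩ }
  · rcases h with h | h
    · exact { h with eq_upper := fun m hm => h.eq_upper m (Finset.mem_insert_of_mem hm) }
    · exact { h with eq_lower := fun m hm => h.eq_lower m (Finset.mem_insert_of_mem hm) }

lemma IsGarnir.not_insert_right [DecidableEq ι] (h : IsGarnir g γ i (insert p P) Q g') :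
    ¬ IsGarnir g γ i P (insert p Q) g' := fun h' => by
  have := (h.eq_upper p (Finset.mem_insert_self _ _)).symm.trans
    (h'.eq_lower p (Finset.mem_insert_self _ _))
  simp at this

end Redistribution

section Rows

variable {ι Γ : Type*} [Fintype ι] {f g g' : ι → Γ × ℕ} {γ : Γ} {i : ℕ} {P Q : Finset ι} {m : ι}

/-- The positions in a given row. -/
noncomputable def rowSet (f : ι → Γ × ℕ) (c : Γ × ℕ) : Finset ι :=
  Finset.univ.filter fun m => f m = c

lemma mem_rowSet {c : Γ × ℕ} : m ∈ rowSet f c ↔ f m = c := by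
  simp [rowSet]

/-- The row lengths weakly decrease within every component. -/
def RowsAntitone (f : ι → Γ × ℕ) : Prop :=
  ∀ γ, Antitone fun a => (rowSet f (γ, a)).card

lemma card_rowSet_comp (f : ι → Γ × ℕ) (ρ : Equiv.Perm ι) (c : Γ × ℕ) :
    (rowSet (f ∘ ρ) c).card = (rowSet f c).card :=
  Finset.card_equiv ρ fun m => by simp only [mem_rowSet, Function.comp_apply]

lemma RowsAntitone.comp (hf : RowsAntitone f) (ρ : Equiv.Perm ι) : RowsAntitone (f ∘ ρ) :=
  fun γ => by simpa only [card_rowSet_comp] using hf γ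

lemma isGarnir_self (hP : P ⊆ rowSet g (γ, i)) (hQ : Q ⊆ rowSet g (γ, i + 1)) :
    IsGarnir g γ i P Q g :=
  ⟨fun _ _ _ => rfl, fun _ => id, fun _ hm => mem_rowSet.1 (hP hm),
    fun _ hm => mem_rowSet.1 (hQ hm)⟩

/-- Every initial segment meets an upper row at least as often as the next one. -/
def IsBallot [LinearOrder ι] (g : ι → Γ × ℕ) : Prop :=
  ∀ (γ : Γ) (i : ℕ) (θ : ι), ((rowSet g (γ, i + 1)).filter (· ≤ θ)).card ≤
    ((rowSet g (γ, i)).filter (· ≤ θ)).card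

lemma IsGarnir.eq_or_of_filter [LinearOrder ι] {θ : ι}
    (h : IsGarnir g γ i ((rowSet g (γ, i)).filter (· ≤ θ))
      ((rowSet g (γ, i + 1)).filter (θ < ·)) g') (m : ι) :
    g' m = g m ∨ (m ≤ θ ∧ g m = (γ, i + 1) ∧ g' m = (γ, i)) ∨
      (θ < m ∧ g m = (γ, i) ∧ g' m = (γ, i + 1)) := by
  have h₁ := h.eq_of_ne m
  have h₂ := h.eq_or_eq m
  have h₃ := h.eq_upper m
  have h₄ := h.eq_lower m
  simp only [Finset.mem_filter, mem_rowSet] at h₃ h₄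
  grind

/-- The sum `∑ m, m * (row of m)`, which increases in a Garnir straightening. -/
def rowWeight {n : ℕ} (g : Fin n → Γ × ℕ) : ℕ :=
  ∑ m : Fin n, (m : ℕ) * (g m).2

/-- Since the row indices have the same sum, `∑ m, (2 m - 2 θ - 1) * (row of m)` increases just as
`2 * rowWeight` does, and in that sum each moved position has a positive contribution. -/
lemma IsGarnir.rowWeight_lt {n : ℕ} {g g' : Fin n → Γ × ℕ} {θ : Fin n}
    (h : IsGarnir g γ i ((rowSet g (γ, i)).filter (· ≤ θ))
      ((rowSet g (γ, i + 1)).filter (θ < ·)) g')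
    (hsum : ∑ m, (g' m).2 = ∑ m, (g m).2) (hne : g' ≠ g) : rowWeight g < rowWeight g' := by
  let c (m : Fin n) : ℤ := (2 * (m : ℤ) - 2 * (θ : ℤ) - 1) * (((g' m).2 : ℤ) - ((g m).2 : ℤ))
  have hpos m (hm : g' m ≠ g m) : 0 < c m := by
    rcases (h.eq_or_of_filter m).resolve_left hm with ⟨hle, hg, hg'⟩ | ⟨hlt, hg, hg'⟩
    · rw [Fin.le_def] at hle
      simp only [c, hg, hg']
      push_cast
      linarith
    · rw [Fin.lt_def] at hlt
      simp only [c, hg, hg']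
      push_cast
      linarith
  have hnonneg m : 0 ≤ c m := by
    by_cases hm : g' m = g m
    · simp [c, hm]
    · exact (hpos m hm).le
  obtain ⟨m₀, hm₀⟩ := Function.ne_iff.1 hne
  have hc_pos : 0 < ∑ m, c m :=
    Finset.sum_pos' (fun m _ => hnonneg m) ⟨m₀, Finset.mem_univ _, hpos m₀ hm₀⟩
  have hsum' : ∑ m, ((g' m).2 : ℤ) = ∑ m, ((g m).2 : ℤ) := by exact_mod_cast hsum
  have hc : ∑ m, c m = 2 * ((rowWeight g' : ℤ) - rowWeight g) -
      (2 * (θ : ℤ) + 1) * (∑ m, ((g' m).2 : ℤ) - ∑ m, ((g m).2 : ℤ)) := by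
    simp only [rowWeight, Nat.cast_sum, Nat.cast_mul, ← Finset.sum_sub_distrib, Finset.mul_sum]
    exact Finset.sum_congr rfl fun m _ => by ring
  rw [hc, hsum'] at hc_pos
  zify
  linarith

end Rows

section MergeRows

variable {ι Γ : Type*} [Fintype ι] [PartialOrder Γ] {g : ι → Γ × ℕ} {γ : Γ} {i : ℕ} {Q : Finset ι}

lemma card_domSet (f : ι → Γ × ℕ) (γ : Γ) (J : Finset ℕ) :
    (domSet f γ J).card = (domSet f γ ∅).card + ∑ a ∈ J, (rowSet f (γ, a)).card := by
  induction J using Finset.induction_on with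
  | empty => simp
  | insert a J ha ih =>
    rw [Finset.sum_insert ha, add_left_comm, ← ih, add_comm, ← Finset.card_union_of_disjoint]
    · congr 1
      ext m
      simp only [Finset.mem_union, mem_domSet, mem_rowSet, Finset.mem_insert, Prod.ext_iff]
      tauto
    · refine Finset.disjoint_left.2 fun m hdom hrow => ?_
      rw [mem_domSet, mem_rowSet.1 hrow] at hdom
      simp [ha] at hdom

lemma domSet_mono (f : ι → Γ × ℕ) (γ : Γ) : Monotone (domSet f γ) := fun J J' h m => by
  simp only [mem_domSet]
  exact Or.imp_right fun hm => ⟨hm.1, h hm.2⟩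

lemma RowsAntitone.card_domSet_le (hg : RowsAntitone g) (γ : Γ) (J : Finset ℕ) :
    (domSet g γ J).card ≤ (domSet g γ (Finset.range J.card)).card := by
  rw [card_domSet, card_domSet g γ (Finset.range _)]
  exact Nat.add_le_add_left (sum_le_sum_range_card_of_antitone (hg γ) J) _

lemma card_domSet_lt_card_domSet_mergeRows (hcard : Q.card < (rowSet g (γ, i + 1)).card) :
    (domSet g γ (Finset.range (i + 1))).card <
      (domSet (mergeRows g γ i Q) γ (Finset.range (i + 1))).card := by
  have hsub : domSet g γ (Finset.range (i + 2)) \ Q ⊆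
      domSet (mergeRows g γ i Q) γ (Finset.range (i + 1)) := fun m hm => by
    simp only [Finset.mem_sdiff, mem_domSet, Finset.mem_range] at hm ⊢
    rw [mergeRows, if_neg hm.2]
    split_ifs with hrow
    · exact Or.inr ⟨rfl, Nat.lt_succ_self i⟩
    · refine hm.1.imp_right fun h => ⟨h.1, ?_⟩
      have : (g m).2 ≠ i + 1 := fun h' => hrow (Prod.ext h.1 h')
      omega
  have hcard_sub := Finset.card_le_card hsub
  have hcard_sdiff := Finset.le_card_sdiff Q (domSet g γ (Finset.range (i + 2)))
  rw [card_domSet, Finset.sum_range_succ, ← add_assoc, ← card_domSet] at hcard_sdiff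
  omega

lemma domSet_subset_domSet_mergeRows (hQ : ∀ m ∈ Q, g m = (γ, i) ∨ g m = (γ, i + 1)) {δ : Γ}
    {j : ℕ} (h : δ = γ → j ≠ i + 1) :
    domSet g δ (Finset.range j) ⊆ domSet (mergeRows g γ i Q) δ (Finset.range j) := fun m hm => by
  simp only [mem_domSet, fst_mergeRows hQ, Finset.mem_range] at hm ⊢
  refine hm.imp_right fun hm => ⟨hm.1, ?_⟩
  rw [mergeRows]
  split_ifs with hmQ hrow
  · rcases hQ m hmQ with h' | h' <;> rw [h'] at hm
    · exact (Nat.succ_le_of_lt hm.2).lt_of_ne (h hm.1.symm).symm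
    · exact hm.2
  · rw [hrow] at hm
    exact (Nat.lt_succ_self i).trans hm.2
  · exact hm.2

lemma RowsAntitone.strictlyDominates_mergeRows (hg : RowsAntitone g)
    (hQ : ∀ m ∈ Q, g m = (γ, i) ∨ g m = (γ, i + 1))
    (hcard : Q.card < (rowSet g (γ, i + 1)).card) :
    StrictlyDominates (mergeRows g γ i Q) g := by
  have hlt := card_domSet_lt_card_domSet_mergeRows hcard
  refine ⟨fun δ J => ⟨Finset.range J.card, by simp, (hg.card_domSet_le δ J).trans ?_⟩,
    fun hdom => ?_⟩
  · by_cases h : δ = γ ∧ J.card = i + 1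
    · rw [h.1, h.2]
      exact hlt.le
    · exact Finset.card_le_card (domSet_subset_domSet_mergeRows hQ fun h₁ h₂ => h ⟨h₁, h₂⟩)
  · obtain ⟨J', hJ', hle⟩ := hdom γ (Finset.range (i + 1))
    rw [Finset.card_range] at hJ'
    exact hlt.not_ge (hle.trans ((hg.card_domSet_le γ J').trans
      (Finset.card_le_card (domSet_mono g γ (Finset.range_mono hJ')))))

end MergeRows

section GarnirElements

variable {R : Type*} [CommRing R] {A : Type*} [Ring A] [Algebra R A]
  {n : ℕ} {W : Type*} [Ring W] [Algebra R W]
  {φ : ((⨂[R] _ : Fin n, A) ⊗[R] (Equiv.Perm (Fin n) →₀ R)) ≃ₗ[R] W}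
  {Γ : Type*} {y : Γ → A} {f g : Fin n → Γ × ℕ} {γ : Γ} {i : ℕ} {P Q : Finset (Fin n)}
  {p : Fin n}

/-- The permutations moving `f` into a set of functions. -/
noncomputable def movers {ι α : Type*} [Fintype ι] (f : ι → α) (𝒢 : (ι → α) → Prop) :
    Finset (Equiv.Perm ι) :=
  Finset.univ.filter fun σ => 𝒢 (f ∘ ⇑σ⁻¹)

lemma mem_movers {ι α : Type*} [Fintype ι] {f : ι → α} {𝒢 : (ι → α) → Prop}
    {σ : Equiv.Perm ι} : σ ∈ movers f 𝒢 ↔ 𝒢 (f ∘ ⇑σ⁻¹) := by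
  simp [movers]

lemma permSum_movers {α : Type*} [DecidableEq α] (f : Fin n → α) (𝒢 : (Fin n → α) → Prop) :
    permSum φ (movers f 𝒢) = ∑ g ∈ (Finset.univ.image fun τ : Equiv.Perm (Fin n) =>
      f ∘ ⇑τ⁻¹).filter 𝒢, permSum φ (movers f (· = g)) := by
  have hmaps : ∀ τ ∈ movers f 𝒢, f ∘ ⇑τ⁻¹ ∈
      (Finset.univ.image fun τ : Equiv.Perm (Fin n) => f ∘ ⇑τ⁻¹).filter 𝒢 := fun τ hτ =>
    Finset.mem_filter.2 ⟨Finset.mem_image_of_mem _ (Finset.mem_univ _), mem_movers.1 hτ⟩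
  rw [permSum, ← Finset.sum_fiberwise_of_maps_to hmaps]
  refine Finset.sum_congr rfl fun g hg => Finset.sum_congr ?_ fun _ _ => rfl
  ext τ
  simp only [Finset.mem_filter, mem_movers, and_iff_right_iff_imp]
  rintro rfl
  exact (Finset.mem_filter.1 hg).2

lemma permSum_movers_isGarnir (hp : g p = (γ, i) ∨ g p = (γ, i + 1)) :
    permSum φ (movers f (IsGarnir g γ i P Q)) =
      permSum φ (movers f (IsGarnir g γ i (insert p P) Q)) +
        permSum φ (movers f (IsGarnir g γ i P (insert p Q))) := by
  simp only [permSum, movers]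
  rw [← Finset.sum_union (Finset.disjoint_filter.2 fun _ _ h => h.not_insert_right),
    ← Finset.filter_or]
  simp only [← isGarnir_iff_insert hp]

namespace IsWreathProduct

variable (hφ : IsWreathProduct φ)
include hφ

lemma sElt_mul_rowElt_eq (f : Fin n → Γ × ℕ) (σ : Equiv.Perm (Fin n)) :
    sElt φ σ * rowElt φ y f = wm φ (fun i => y (f (σ⁻¹ i)).1) 1 *
      permSum φ (movers f (· = f ∘ ⇑σ⁻¹)) := by
  rw [rowElt, ← mul_assoc, hφ.sElt_mul_wm, mul_assoc]
  congr 1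
  simp only [permSum, Finset.mul_sum, hφ.sElt_mul_sElt]
  refine Finset.sum_equiv (Equiv.mulLeft σ) (fun τ => ?_) fun _ _ => rfl
  simp only [mem_fiberPerms, mem_movers, Equiv.coe_mulLeft, mul_inv_rev, funext_iff,
    Function.comp_apply, Equiv.Perm.mul_apply]
  exact ⟨fun h i => by simpa using (h (τ⁻¹ (σ⁻¹ i))).symm,
    fun h i => by simpa using (h (σ (τ i))).symm⟩

lemma sElt_mul_rowElt_congr {σ τ : Equiv.Perm (Fin n)} (h : f ∘ ⇑σ⁻¹ = f ∘ ⇑τ⁻¹) :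
    sElt φ σ * rowElt φ y f = sElt φ τ * rowElt φ y f := by
  have h' i : f (σ⁻¹ i) = f (τ⁻¹ i) := congrFun h i
  simp only [hφ.sElt_mul_rowElt_eq, h, h']

variable [PartialOrder Γ]

lemma wm_mul_permSum_isGarnir_empty_mem (hg : RowsAntitone g)
    (hQ : ∀ m ∈ Q, g m = (γ, i) ∨ g m = (γ, i + 1))
    (hcard : Q.card < (rowSet g (γ, i + 1)).card) :
    wm φ (fun i => y (g i).1) 1 * permSum φ (movers f (IsGarnir g γ i ∅ Q)) ∈
      domIdeal φ y g := by
  obtain ⟨z, hz⟩ := hφ.permSum_fiberPerms_dvd (mergeRows g γ i Q)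
    (movers f (IsGarnir g γ i ∅ Q)) fun σ hσ ω hω => by
      rw [mem_movers, isGarnir_empty_iff hQ] at hω ⊢
      intro m
      rw [← mem_fiberPerms.1 (inv_mem_fiberPerms hσ) m]
      exact hω (σ⁻¹ m)
  have hmem := mul_rowElt_mul_mem_domIdeal (φ := φ) (y := y)
    (hg.strictlyDominates_mergeRows hQ hcard) 1 z
  simp only [rowElt, fst_mergeRows hQ] at hmem
  rwa [one_mul, mul_assoc, ← hz] at hmem

/-- A position `p` may be moved from `P` to `Q`, because the row functions putting `p` in either of
the two rows are those which do not prescribe `p`. -/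
lemma wm_mul_permSum_isGarnir_mem (hg : RowsAntitone g)
    (hP : ∀ m ∈ P, g m = (γ, i) ∨ g m = (γ, i + 1))
    (hQ : ∀ m ∈ Q, g m = (γ, i) ∨ g m = (γ, i + 1))
    (hcard : P.card + Q.card < (rowSet g (γ, i + 1)).card) :
    wm φ (fun i => y (g i).1) 1 * permSum φ (movers f (IsGarnir g γ i P Q)) ∈
      domIdeal φ y g := by
  induction P using Finset.induction_on generalizing Q with
  | empty => exact hφ.wm_mul_permSum_isGarnir_empty_mem hg hQ (by simpa using hcard)
  | insert p P hp ih =>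
    rw [Finset.card_insert_of_notMem hp] at hcard
    rw [Finset.forall_mem_insert] at hP
    have hunprescribed := ih hP.2 hQ (by omega)
    have hlower := ih hP.2 ((Finset.forall_mem_insert _ _ _).2 ⟨hP.1, hQ⟩)
      (by have := Finset.card_insert_le p Q; omega)
    rw [permSum_movers_isGarnir hP.1, mul_add]
      at hunprescribed
    exact (Submodule.add_mem_iff_left _ hlower).1 hunprescribed

lemma sElt_mul_rowElt_mem_of_isGarnir (hf : RowsAntitone f) {S : Submodule R W}
    (hS : domIdeal φ y f ≤ S) {σ : Equiv.Perm (Fin n)}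
    (hP : P ⊆ rowSet (f ∘ ⇑σ⁻¹) (γ, i)) (hQ : Q ⊆ rowSet (f ∘ ⇑σ⁻¹) (γ, i + 1))
    (hcard : P.card + Q.card < (rowSet (f ∘ ⇑σ⁻¹) (γ, i + 1)).card)
    (h : ∀ τ : Equiv.Perm (Fin n), IsGarnir (f ∘ ⇑σ⁻¹) γ i P Q (f ∘ ⇑τ⁻¹) →
      f ∘ ⇑τ⁻¹ ≠ f ∘ ⇑σ⁻¹ → sElt φ τ * rowElt φ y f ∈ S) :
    sElt φ σ * rowElt φ y f ∈ S := by
  have hmem := hS (domIdeal_le (dominates_comp f σ⁻¹)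
    (hφ.wm_mul_permSum_isGarnir_mem (y := y) (f := f) (hf.comp σ⁻¹)
      (fun m hm => Or.inl (mem_rowSet.1 (hP hm))) (fun m hm => Or.inr (mem_rowSet.1 (hQ hm)))
      hcard))
  have hself : f ∘ ⇑σ⁻¹ ∈ (Finset.univ.image fun τ : Equiv.Perm (Fin n) => f ∘ ⇑τ⁻¹).filter
      (IsGarnir (f ∘ ⇑σ⁻¹) γ i P Q) :=
    Finset.mem_filter.2 ⟨Finset.mem_image.2 ⟨σ, Finset.mem_univ _, rfl⟩, isGarnir_self hP hQ⟩
  rw [permSum_movers, Finset.mul_sum, ← Finset.add_sum_erase _ _ hself] at hmem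
  rw [hφ.sElt_mul_rowElt_eq]
  refine (Submodule.add_mem_iff_left S (Submodule.sum_mem _ fun g' hg' => ?_)).1 hmem
  simp only [Finset.mem_erase, Finset.mem_filter, Finset.mem_image, Finset.mem_univ,
    true_and] at hg'
  obtain ⟨hne, ⟨τ, rfl⟩, hgarnir⟩ := hg'
  have hτ := h τ hgarnir hne
  have hfst i : (f (τ⁻¹ i)).1 = (f (σ⁻¹ i)).1 := hgarnir.fst_eq i
  rw [hφ.sElt_mul_rowElt_eq] at hτ
  simpa only [Function.comp_apply, hfst] using hτ

lemma sElt_mul_rowElt_mem (hf : RowsAntitone f) (σ : Equiv.Perm (Fin n)) :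
    sElt φ σ * rowElt φ y f ∈ Submodule.span R
      {x | ∃ τ : Equiv.Perm (Fin n), IsBallot (f ∘ ⇑τ⁻¹) ∧ x = sElt φ τ * rowElt φ y f} ⊔
        domIdeal φ y f := by
  let r (τ σ : Equiv.Perm (Fin n)) : Prop := rowWeight (f ∘ ⇑σ⁻¹) < rowWeight (f ∘ ⇑τ⁻¹)
  have : IsTrans _ r := ⟨fun _ _ _ h h' => lt_trans h' h⟩
  have : Std.Irrefl r := ⟨fun _ => lt_irrefl _⟩
  induction σ using (Finite.wellFounded_of_trans_of_irrefl r).induction with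
  | _ σ ih =>
  by_cases hballot : IsBallot (f ∘ ⇑σ⁻¹)
  · exact Submodule.mem_sup_left (Submodule.subset_span ⟨σ, hballot, rfl⟩)
  simp only [IsBallot, not_forall, not_le] at hballot
  obtain ⟨γ, i, θ, hlt⟩ := hballot
  refine hφ.sElt_mul_rowElt_mem_of_isGarnir (γ := γ) (i := i) hf le_sup_right
    (Finset.filter_subset (· ≤ θ) _) (Finset.filter_subset (θ < ·) _) ?_
    fun τ hτ hne => ih τ (hτ.rowWeight_lt ?_ hne)
  · have := Finset.card_filter_add_card_filter_not (s := rowSet (f ∘ ⇑σ⁻¹) (γ, i + 1)) (· ≤ θ)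
    simp only [not_le] at this
    omega
  · exact (Equiv.sum_comp τ⁻¹ fun m => (f m).2).trans (Equiv.sum_comp σ⁻¹ fun m => (f m).2).symm

end IsWreathProduct

end GarnirElements

/-! ### Tableaux and shapes -/

namespace MCells

variable {r : ℕ} {lam : Fin r → YoungDiagram}

lemma ext {x z : MCells lam} (hcomp : x.1 = z.1) (hcell : (x.2 : ℕ × ℕ) = z.2) : x = z := by
  obtain ⟨k, c, hc⟩ := x
  obtain ⟨k', c', hc'⟩ := z
  dsimp only at hcomp hcell
  subst hcomp hcell
  rfl

lemma card_eq (lam : Fin r → YoungDiagram) : Fintype.card (MCells lam) = ∑ k, (lam k).card := by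
  have hsigma : Fintype.card (MCells lam) =
      Fintype.card ((k : Fin r) × {c : ℕ × ℕ // c ∈ (lam k).cells}) :=
    Fintype.card_congr (Equiv.refl _)
  simp [hsigma, YoungDiagram.card]

end MCells

section RowRank

variable {ι Γ : Type*} [Fintype ι] [LinearOrder ι] {g : ι → Γ × ℕ} {m m' : ι}

/-- The number of earlier positions in the same row. -/
noncomputable def rowRank (g : ι → Γ × ℕ) (m : ι) : ℕ :=
  ((rowSet g (g m)).filter (· < m)).card

lemma rowRank_lt_rowRank (h : g m = g m') (hlt : m < m') : rowRank g m < rowRank g m' := by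
  refine Finset.card_lt_card (Finset.ssubset_iff_of_subset (fun i hi => ?_) |>.2 ⟨m, ?_, ?_⟩)
  · simp only [Finset.mem_filter, mem_rowSet] at hi ⊢
    exact ⟨hi.1.trans h, hi.2.trans hlt⟩
  · simp [mem_rowSet, h, hlt]
  · simp

lemma injOn_rowRank (c : Γ × ℕ) : Set.InjOn (rowRank g) (rowSet g c) := by
  intro m hm m' hm' h
  have hrow : g m = g m' := (mem_rowSet.1 hm).trans (mem_rowSet.1 hm').symm
  rcases lt_trichotomy m m' with hlt | heq | hgt
  · exact absurd h (rowRank_lt_rowRank hrow hlt).ne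
  · exact heq
  · exact absurd h (rowRank_lt_rowRank hrow.symm hgt).ne'

lemma image_rowRank (g : ι → Γ × ℕ) (c : Γ × ℕ) :
    (rowSet g c).image (rowRank g) = Finset.range (rowSet g c).card := by
  refine Finset.eq_of_subset_of_card_le (fun j hj => ?_) ?_
  · obtain ⟨m, hm, rfl⟩ := Finset.mem_image.1 hj
    rw [Finset.mem_range, ← mem_rowSet.1 hm]
    exact Finset.card_lt_card (Finset.filter_ssubset.2 ⟨m, by simp [mem_rowSet]⟩)
  · rw [Finset.card_range, Finset.card_image_of_injOn (injOn_rowRank c)]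

lemma exists_rowRank_eq_iff {γ : Γ} {a j : ℕ} :
    (∃ m, g m = (γ, a) ∧ rowRank g m = j) ↔ j < (rowSet g (γ, a)).card := by
  simp [← Finset.mem_range, ← image_rowRank, mem_rowSet]

lemma IsBallot.card_filter_le (hg : IsBallot g) (γ : Γ) (θ : ι) {a b : ℕ} (h : a ≤ b) :
    ((rowSet g (γ, b)).filter (· ≤ θ)).card ≤ ((rowSet g (γ, a)).filter (· ≤ θ)).card :=
  antitone_nat_of_succ_le (f := fun a => ((rowSet g (γ, a)).filter (· ≤ θ)).card)
    (fun i => hg γ i θ) h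

lemma card_filter_le_eq_rowRank_add_one (g : ι → Γ × ℕ) (m : ι) :
    ((rowSet g (g m)).filter (· ≤ m)).card = rowRank g m + 1 := by
  have : (rowSet g (g m)).filter (· ≤ m) = insert m ((rowSet g (g m)).filter (· < m)) := by
    ext i
    simp only [Finset.mem_filter, mem_rowSet, Finset.mem_insert, le_iff_eq_or_lt]
    grind
  rw [this, Finset.card_insert_of_notMem (by simp), rowRank]

lemma IsBallot.lt_of_rowRank_le (hg : IsBallot g) (hcomp : (g m).1 = (g m').1)
    (hrow : (g m).2 ≤ (g m').2) (hcol : rowRank g m ≤ rowRank g m') (hne : m ≠ m') : m < m' := by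
  by_contra hlt
  have hlt : m' < m := lt_of_le_of_ne (not_lt.1 hlt) hne.symm
  have hupper : ((rowSet g (g m)).filter (· ≤ m')).card ≤ rowRank g m :=
    Finset.card_le_card (Finset.monotone_filter_right _ fun i _ hi => hi.trans_lt hlt)
  have hlower := hg.card_filter_le (g m').1 m' hrow
  rw [← hcomp, Prod.mk.eta, hcomp, Prod.mk.eta, card_filter_le_eq_rowRank_add_one] at hlower
  omega

end RowRank

section RowFunctions

variable {Γ : Type*} {r n : ℕ} {l : Fin r → Γ} {lam : Fin r → YoungDiagram}
  {g : Fin n → Γ × ℕ}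

/-- The row function of a tableau: the component, as an element of `Γ`, and the row of an entry. -/
def rowFn (l : Fin r → Γ) (S : MCells lam ≃ Fin n) (m : Fin n) : Γ × ℕ :=
  (l (S.symm m).1, ((S.symm m).2 : ℕ × ℕ).1)

lemma rowFn_apply (l : Fin r → Γ) (S : MCells lam ≃ Fin n) (x : MCells lam) :
    rowFn l S (S x) = (l x.1, (x.2 : ℕ × ℕ).1) := by
  unfold rowFn
  rw [S.symm_apply_apply]

lemma rowFn_comp_dperm (l : Fin r → Γ) (tl S : MCells lam ≃ Fin n) :
    rowFn l tl ∘ ⇑(dperm tl S)⁻¹ = rowFn l S :=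
  funext fun m => rowFn_apply l tl (S.symm m)

lemma rowStab_eq_fiberPerms (hl : Function.Injective l) (tl : MCells lam ≃ Fin n) :
    rowStab tl = fiberPerms (rowFn l tl) := by
  ext σ
  rw [mem_fiberPerms, ← tl.forall_congr_right]
  simp only [rowStab, Finset.mem_filter, Finset.mem_univ, true_and, rowFn_apply]
  simp only [rowFn, Prod.mk.injEq, hl.eq_iff]

lemma card_rowSet_rowFn (hl : Function.Injective l) (tl : MCells lam ≃ Fin n) (k : Fin r) (a : ℕ) :
    (rowSet (rowFn l tl) (l k, a)).card = (lam k).rowLen a := by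
  rw [← Finset.card_range ((lam k).rowLen a)]
  refine Finset.card_bij (fun m _ => ((tl.symm m).2 : ℕ × ℕ).2) (fun m hm => ?_)
    (fun m hm m' hm' h => ?_) fun j hj => ?_
  · simp only [mem_rowSet, rowFn, Prod.mk.injEq, hl.eq_iff] at hm
    obtain ⟨rfl, rfl⟩ := hm
    rw [Finset.mem_range, ← YoungDiagram.mem_iff_lt_rowLen]
    exact (tl.symm m).2.2
  · simp only [mem_rowSet, rowFn, Prod.mk.injEq, hl.eq_iff] at hm hm'
    exact tl.symm.injective
      (MCells.ext (hm.1.trans hm'.1.symm) (Prod.ext (hm.2.trans hm'.2.symm) h))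
  · rw [Finset.mem_range, ← YoungDiagram.mem_iff_lt_rowLen] at hj
    let x : MCells lam := ⟨k, (a, j), hj⟩
    exact ⟨tl x, mem_rowSet.2 (rowFn_apply l tl x), by rw [tl.symm_apply_apply]⟩

lemma rowsAntitone_rowFn (hl : Function.Bijective l) (tl : MCells lam ≃ Fin n) :
    RowsAntitone (rowFn l tl) := fun γ a b h => by
  obtain ⟨k, rfl⟩ := hl.surjective γ
  simpa only [card_rowSet_rowFn hl.injective] using (lam k).rowLen_anti _ _ h

lemma exists_rowFn_eq (hl : Function.Bijective l)
    (hg : ∀ k a j, (a, j) ∈ lam k ↔ j < (rowSet g (l k, a)).card) :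
    ∃ S : MCells lam ≃ Fin n, rowFn l S = g ∧
      ∀ m, ((S.symm m).2 : ℕ × ℕ).2 = rowRank g m := by
  choose k hk using fun m => hl.surjective (g m).1
  have hmem m : ((g m).2, rowRank g m) ∈ lam (k m) :=
    (hg _ _ _).2 (exists_rowRank_eq_iff.1 ⟨m, by rw [hk], rfl⟩)
  let cell (m : Fin n) : MCells lam := ⟨k m, ((g m).2, rowRank g m), hmem m⟩
  have hcell : Function.Bijective cell := by
    refine ⟨fun m m' h => ?_, fun ⟨k', ⟨a, j⟩, hc⟩ => ?_⟩
    · have hcomp : k m = k m' := congrArg Sigma.fst h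
      have hpos : ((g m).2, rowRank g m) = ((g m').2, rowRank g m') :=
        congrArg (fun x : MCells lam => (x.2 : ℕ × ℕ)) h
      have hrow : g m = g m' := Prod.ext (by rw [← hk, hcomp, hk]) (congrArg Prod.fst hpos)
      exact injOn_rowRank (g m') (mem_rowSet.2 hrow) (mem_rowSet.2 rfl) (congrArg Prod.snd hpos)
    · obtain ⟨m, hm, hrank⟩ := exists_rowRank_eq_iff.2 ((hg _ _ _).1 hc)
      have hcomp : k m = k' := hl.injective (by rw [hk, hm])
      exact ⟨m, MCells.ext hcomp (Prod.ext (congrArg Prod.snd hm) hrank)⟩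
  exact ⟨(Equiv.ofBijective cell hcell).symm, funext fun m => Prod.ext (hk m) rfl, fun m => rfl⟩

lemma IsBallot.exists_isStdTableau (hb : IsBallot g) (hl : Function.Bijective l)
    (hg : ∀ k a j, (a, j) ∈ lam k ↔ j < (rowSet g (l k, a)).card) :
    ∃ S : MCells lam ≃ Fin n, rowFn l S = g ∧ IsStdTableau S := by
  obtain ⟨S, rfl, hS⟩ := exists_rowFn_eq hl hg
  refine ⟨S, rfl, fun x z hcomp hrow hcol hne => ?_⟩
  have hrank x : rowRank (rowFn l S) (S x) = (x.2 : ℕ × ℕ).2 := by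
    rw [← hS, S.symm_apply_apply]
  refine hb.lt_of_rowRank_le ?_ ?_ ?_ (S.injective.ne hne)
  · simpa only [rowFn_apply] using congrArg l hcomp
  · simpa only [rowFn_apply] using hrow
  · simpa only [hrank] using hcol

/-- The Young diagram whose rows have the lengths of the rows of `g` in the component `γ`. -/
noncomputable def RowsAntitone.diagram (hg : RowsAntitone g) (γ : Γ) : YoungDiagram where
  cells := (Finset.univ.filter fun m => (g m).1 = γ).image fun m => ((g m).2, rowRank g m)
  isLowerSet := by
    have hmem a j : (a, j) ∈ (Finset.univ.filter fun m => (g m).1 = γ).image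
        (fun m => ((g m).2, rowRank g m)) ↔ j < (rowSet g (γ, a)).card := by
      simp [← exists_rowRank_eq_iff, Prod.ext_iff, and_assoc]
    rintro ⟨a, j⟩ ⟨a', j'⟩ ⟨ha, hj⟩ h
    rw [Finset.mem_coe, hmem] at h ⊢
    exact (hj.trans_lt h).trans_le (hg γ ha)

lemma RowsAntitone.mem_diagram (hg : RowsAntitone g) {γ : Γ} {a j : ℕ} :
    (a, j) ∈ hg.diagram γ ↔ j < (rowSet g (γ, a)).card := by
  simp [← YoungDiagram.mem_cells, diagram, ← exists_rowRank_eq_iff, Prod.ext_iff, and_assoc]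

lemma RowsAntitone.exists_rowFn_eq (hg : RowsAntitone g) (hl : Function.Bijective l) :
    ∃ (lam : MPar r n) (S : MCells lam.1 ≃ Fin n), rowFn l S = g := by
  obtain ⟨S, hS, -⟩ := _root_.exists_rowFn_eq (lam := fun k => hg.diagram (l k)) hl
    fun _ _ _ => hg.mem_diagram
  exact ⟨⟨fun k => hg.diagram (l k), (MCells.card_eq _).symm.trans
    ((Fintype.card_congr S).trans (Fintype.card_fin n))⟩, S, hS⟩

end RowFunctions

section Shapes

variable {Γ : Type*} [PartialOrder Γ] {r n : ℕ} {l : Fin r → Γ} {mu lam nu : Fin r → YoungDiagram}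

lemma card_domSet_rowFn_empty (l : Fin r → Γ) (tl : MCells lam ≃ Fin n) (k : Fin r) :
    (domSet (rowFn l tl) (l k) ∅).card =
      ∑ k' ∈ Finset.univ.filter (fun k' => l k < l k'), (lam k').card := by
  rw [Finset.card_eq_sum_card_fiberwise (f := fun m => (tl.symm m).1)
    (t := Finset.univ.filter (fun k' => l k < l k'))
    fun m hm => by simpa [mem_domSet, rowFn] using hm]
  refine Finset.sum_congr rfl fun k' hk' => ?_
  refine Finset.card_bij (fun m _ => ((tl.symm m).2 : ℕ × ℕ)) (fun m hm => ?_)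
    (fun m hm m' hm' h => ?_) fun c hc => ?_
  · rw [← (Finset.mem_filter.1 hm).2]
    exact (tl.symm m).2.2
  · exact tl.symm.injective
      (MCells.ext ((Finset.mem_filter.1 hm).2.trans (Finset.mem_filter.1 hm').2.symm) h)
  · let x : MCells lam := ⟨k', c, hc⟩
    refine ⟨tl x, Finset.mem_filter.2 ⟨mem_domSet.2 (Or.inl ?_), ?_⟩, ?_⟩
    · rw [rowFn_apply]
      exact (Finset.mem_filter.1 hk').2
    all_goals rw [tl.symm_apply_apply]

lemma gDomL_iff_dominates (hl : Function.Bijective l) (tm : MCells mu ≃ Fin n)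
    (tl : MCells lam ≃ Fin n) : GDomL l mu lam ↔ Dominates (rowFn l tm) (rowFn l tl) := by
  have hcount : GDomL l mu lam ↔ ∀ γ j, (domSet (rowFn l tl) γ (Finset.range j)).card ≤
      (domSet (rowFn l tm) γ (Finset.range j)).card := by
    rw [hl.surjective.forall]
    simp only [card_domSet _ _ (Finset.range _), card_domSet_rowFn_empty,
      card_rowSet_rowFn hl.injective]
    rfl
  refine hcount.trans ⟨fun h γ J => ⟨Finset.range J.card, by simp,
    ((rowsAntitone_rowFn hl tl).card_domSet_le γ J).trans (h γ _)⟩, fun h γ j => ?_⟩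
  obtain ⟨J, hJ, hle⟩ := h γ (Finset.range j)
  rw [Finset.card_range] at hJ
  exact hle.trans (((rowsAntitone_rowFn hl tm).card_domSet_le γ J).trans
    (Finset.card_le_card (domSet_mono _ γ (Finset.range_mono hJ))))

lemma GDomL.trans (h : GDomL l nu mu) (h' : GDomL l mu lam) : GDomL l nu lam :=
  fun k j => (h' k j).trans (h k j)

lemma GDomL.antisymm (h : GDomL l mu lam) (h' : GDomL l lam mu) : mu = lam := by
  have hsum k j : ∑ i ∈ Finset.range j, (mu k).rowLen i =
      ∑ i ∈ Finset.range j, (lam k).rowLen i := by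
    have hj := (h k j).antisymm (h' k j)
    have h0 := (h k 0).antisymm (h' k 0)
    simp only [Finset.range_zero, Finset.sum_empty, add_zero] at h0
    omega
  funext k
  refine SetLike.ext fun ⟨a, j⟩ => ?_
  have hrow : (mu k).rowLen a = (lam k).rowLen a := by
    have := hsum k (a + 1)
    rwa [Finset.sum_range_succ, Finset.sum_range_succ, hsum k a, Nat.add_left_cancel_iff] at this
  rw [YoungDiagram.mem_iff_lt_rowLen, YoungDiagram.mem_iff_lt_rowLen, hrow]

end Shapes

section RelabelRows

variable {ι Γ : Type*} {e : Γ → Equiv.Perm ℕ} {f : ι → Γ × ℕ}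

/-- Relabels the rows within each component `γ` by the permutation `e γ`, without moving any
position to another component or splitting a row. -/
def relabelRows (e : Γ → Equiv.Perm ℕ) (f : ι → Γ × ℕ) (i : ι) : Γ × ℕ :=
  ((f i).1, e (f i).1 (f i).2)

lemma relabelRows_eq_iff {i j : ι} : relabelRows e f i = relabelRows e f j ↔ f i = f j := by
  simp only [relabelRows, Prod.ext_iff]
  exact and_congr_right fun h => by rw [h, (e _).injective.eq_iff]

lemma relabelRows_inv_relabelRows (e : Γ → Equiv.Perm ℕ) (f : ι → Γ × ℕ) :
    relabelRows e⁻¹ (relabelRows e f) = f := by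
  funext i
  simp [relabelRows]

variable [Fintype ι]

lemma rowSet_relabelRows (e : Γ → Equiv.Perm ℕ) (f : ι → Γ × ℕ) (γ : Γ) (a : ℕ) :
    rowSet (relabelRows e f) (γ, e γ a) = rowSet f (γ, a) := by
  ext m
  simp only [mem_rowSet, relabelRows, Prod.ext_iff]
  exact and_congr_right fun h => by rw [h, (e γ).injective.eq_iff]

lemma relabelRows_dominates [PartialOrder Γ] (e : Γ → Equiv.Perm ℕ) (f : ι → Γ × ℕ) :
    Dominates (relabelRows e f) f := fun γ J => by
  refine ⟨J.map (e γ).toEmbedding, by simp, Finset.card_le_card fun m hm => ?_⟩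
  rw [mem_domSet] at hm ⊢
  refine hm.imp id fun ⟨hγ, hJ⟩ => ⟨hγ, ?_⟩
  simpa [relabelRows, hγ] using hJ

lemma dominates_relabelRows [PartialOrder Γ] (e : Γ → Equiv.Perm ℕ) (f : ι → Γ × ℕ) :
    Dominates f (relabelRows e f) := by
  simpa only [relabelRows_inv_relabelRows] using relabelRows_dominates e⁻¹ (relabelRows e f)

lemma exists_perm_antitone_comp {F : ℕ → ℕ} {N : ℕ} (hF : ∀ a, N ≤ a → F a = 0) :
    ∃ e : Equiv.Perm ℕ, Antitone (F ∘ e) := by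
  let s : Equiv.Perm (Fin N) := Tuple.sort fun i : Fin N => OrderDual.toDual (F i)
  let e := s.extendDomain (Fin.equivSubtype (n := N))
  have he_lt a (h : a < N) : e a = s ⟨a, h⟩ :=
    s.extendDomain_apply_subtype (Fin.equivSubtype (n := N)) (b := a) h
  have he_ge a (h : N ≤ a) : e a = a :=
    s.extendDomain_apply_not_subtype (Fin.equivSubtype (n := N)) (b := a) (not_lt.2 h)
  refine ⟨e, fun a b hab => ?_⟩
  rcases lt_or_ge b N with hb | hb
  · simp only [Function.comp_apply, he_lt b hb, he_lt a (hab.trans_lt hb)]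
    exact Tuple.monotone_sort (fun i : Fin N => OrderDual.toDual (F i))
      (a := ⟨a, hab.trans_lt hb⟩) (b := ⟨b, hb⟩) hab
  · simp [he_ge b hb, hF b hb]

lemma exists_rowsAntitone_relabelRows (f : ι → Γ × ℕ) :
    ∃ e : Γ → Equiv.Perm ℕ, RowsAntitone (relabelRows e f) := by
  have hempty γ a (ha : (Finset.univ.sup fun i => (f i).2) + 1 ≤ a) :
      (rowSet f (γ, a)).card = 0 := by
    refine Finset.card_eq_zero.2 (Finset.eq_empty_of_forall_notMem fun m hm => ?_)
    have hm_le := Finset.le_sup (f := fun i => (f i).2) (Finset.mem_univ m)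
    rw [mem_rowSet.1 hm] at hm_le
    exact (Nat.lt_of_succ_le ha).not_ge hm_le
  choose e he using fun γ => exists_perm_antitone_comp (hempty γ)
  refine ⟨e⁻¹, fun γ => ?_⟩
  convert he γ using 2 with a
  rw [Function.comp_apply, ← rowSet_relabelRows e⁻¹ f]
  simp

end RelabelRows

/-! ### Straightening onto standard tableaux -/

lemma map_mem_of_mem_span_sup {R M N : Type*} [CommRing R] [AddCommGroup M] [Module R M]
    [AddCommGroup N] [Module R N] {F : M →ₗ[R] N} {s : Set M} {J : Submodule R M}
    {P : Submodule R N} {x : M} (hx : x ∈ Submodule.span R s ⊔ J) (hs : ∀ z ∈ s, F z ∈ P)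
    (hJ : ∀ z ∈ J, F z ∈ P) : F x ∈ P :=
  have hle : Submodule.span R s ⊔ J ≤ P.comap F := sup_le (Submodule.span_le.2 hs) hJ
  hle hx

section StandardSpan

variable {R : Type*} [CommRing R] {A : Type*} [Ring A] [Algebra R A]
  {n : ℕ} {W : Type*} [Ring W] [Algebra R W]
  {φ : ((⨂[R] _ : Fin n, A) ⊗[R] (Equiv.Perm (Fin n) →₀ R)) ≃ₗ[R] W}
  {Γ : Type*} {T : Γ → Type*} {r : ℕ} {star : A →ₗ[R] A} {starW : W →ₗ[R] W} {y : Γ → A}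
  {vv : ∀ γ, T γ → A} {l : Fin r → Γ} {lam : Fin r → YoungDiagram}

/-- The left factor `d(s) v` of a Murphy-type element. -/
noncomputable def leftElt
    (φ : ((⨂[R] _ : Fin n, A) ⊗[R] (Equiv.Perm (Fin n) →₀ R)) ≃ₗ[R] W)
    (vv : ∀ γ, T γ → A) (l : Fin r → Γ) (tl : MCells lam ≃ Fin n) (q : TabIdx T l n lam) : W :=
  sElt φ (dperm tl q.1.1) * vElt φ vv l tl q.2

lemma yaElt_mul_xlamElt (hl : Function.Injective l) (tl : MCells lam ≃ Fin n) :
    yaElt φ y l tl * xlamElt φ tl = rowElt φ y (rowFn l tl) := by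
  rw [xlamElt, rowStab_eq_fiberPerms hl]
  rfl

lemma mwElt_eq (hstarW : IsAntiInvolution starW) (hl : Function.Injective l)
    (tl : MCells lam ≃ Fin n) (q q' : TabIdx T l n lam) :
    mwElt φ starW y vv l tl q.1.1 q'.1.1 q.2 q'.2 =
      leftElt φ vv l tl q * rowElt φ y (rowFn l tl) * starW (leftElt φ vv l tl q') := by
  simp only [mwElt, leftElt, hstarW.map_mul, ← yaElt_mul_xlamElt hl, mul_assoc]

namespace IsWreathProduct

variable [PartialOrder Γ] (hφ : IsWreathProduct φ)
include hφ

lemma wm_mul_rowElt_rowFn_mem (hc : IsCyclicCellular star y vv) (tl : MCells lam ≃ Fin n)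
    (b : Fin n → A) :
    wm φ b 1 * rowElt φ y (rowFn l tl) ∈ Submodule.span R
      (Set.range fun τ : ∀ x : MCells lam, T (l x.1) =>
        vElt φ vv l tl τ * rowElt φ y (rowFn l tl)) ⊔ domIdeal φ y (rowFn l tl) := by
  have hrange := (Equiv.piCongrLeft' (fun x : MCells lam => T (l x.1)) tl).surjective.range_comp
    fun τ => wm φ (fun i => vv (l (tl.symm i).1) (τ i)) 1 * rowElt φ y (rowFn l tl)
  have h := hφ.wm_mul_rowElt_mem hc (rowFn l tl) b
  exact (congrArg (fun s => _ ∈ Submodule.span R s ⊔ domIdeal φ y (rowFn l tl)) hrange).mpr h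

lemma sElt_mul_rowElt_rowFn_mem (hl : Function.Bijective l) (tl : MCells lam ≃ Fin n)
    (σ : Equiv.Perm (Fin n)) :
    sElt φ σ * rowElt φ y (rowFn l tl) ∈ Submodule.span R
      (Set.range fun S : {S : MCells lam ≃ Fin n // IsStdTableau S} =>
        sElt φ (dperm tl S.1) * rowElt φ y (rowFn l tl)) ⊔ domIdeal φ y (rowFn l tl) := by
  refine SetLike.le_def.1 (sup_le_sup_right (Submodule.span_mono ?_) _)
    (hφ.sElt_mul_rowElt_mem (rowsAntitone_rowFn hl tl) σ)
  rintro _ ⟨τ, hτ, rfl⟩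
  obtain ⟨S, hS, hstd⟩ := hτ.exists_isStdTableau (lam := lam) hl fun k a j => by
    rw [card_rowSet_comp, card_rowSet_rowFn hl.injective, YoungDiagram.mem_iff_lt_rowLen]
  exact ⟨⟨S, hstd⟩, hφ.sElt_mul_rowElt_congr (by rw [rowFn_comp_dperm, hS])⟩

lemma mul_rowElt_rowFn_mem (hc : IsCyclicCellular star y vv) (hl : Function.Bijective l)
    (tl : MCells lam ≃ Fin n) (a : W) :
    a * rowElt φ y (rowFn l tl) ∈ Submodule.span R
      (Set.range fun q : TabIdx T l n lam => leftElt φ vv l tl q * rowElt φ y (rowFn l tl)) ⊔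
        domIdeal φ y (rowFn l tl) := by
  induction a using wm_induction (φ := φ) with
  | zero => simp
  | add x z hx hz => rw [add_mul]; exact add_mem hx hz
  | smul c x hx => rw [smul_mul_assoc]; exact Submodule.smul_mem _ _ hx
  | wm b σ =>
    rw [← one_mul σ, ← hφ.wm_mul_sElt, mul_assoc]
    refine map_mem_of_mem_span_sup (F := LinearMap.mulLeft R (wm φ b 1))
      (hφ.sElt_mul_rowElt_rowFn_mem hl tl σ) ?_
      fun z hz => Submodule.mem_sup_right (mul_mem_domIdeal _ hz)
    rintro _ ⟨S, rfl⟩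
    have hcomm : wm φ b 1 * sElt φ (dperm tl S.1) =
        sElt φ (dperm tl S.1) * wm φ (fun i => b (dperm tl S.1 i)) 1 := by
      simp [hφ.sElt_mul_wm]
    rw [LinearMap.mulLeft_apply, ← mul_assoc, hcomm, mul_assoc]
    refine map_mem_of_mem_span_sup (F := LinearMap.mulLeft R (sElt φ (dperm tl S.1)))
      (hφ.wm_mul_rowElt_rowFn_mem hc tl _) ?_
      fun z hz => Submodule.mem_sup_right (mul_mem_domIdeal _ hz)
    rintro _ ⟨τ, rfl⟩
    exact Submodule.mem_sup_left (Submodule.subset_span ⟨(S, τ), mul_assoc _ _ _⟩)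

variable (hstar : IsAntiInvolution star) (hsw : IsWreathStar φ star starW)
include hstar hsw

lemma starW_mul_rowElt_congr (hc : IsCyclicCellular star y vv) (f : Fin n → Γ × ℕ) (a : W) :
    starW (a * rowElt φ y f) ≡ rowElt φ y f * starW a [SMOD domIdeal φ y f] := by
  rw [(hφ.isAntiInvolution hstar hsw).map_mul]
  exact mul_congr_domIdeal_right (hφ.starW_rowElt_congr hstar hsw hc f) _

lemma rowElt_rowFn_mul_mem (hc : IsCyclicCellular star y vv) (hl : Function.Bijective l)
    (tl : MCells lam ≃ Fin n) (b : W) :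
    rowElt φ y (rowFn l tl) * b ∈ Submodule.span R
      (Set.range fun q : TabIdx T l n lam =>
        rowElt φ y (rowFn l tl) * starW (leftElt φ vv l tl q)) ⊔ domIdeal φ y (rowFn l tl) := by
  set P := Submodule.span R (Set.range fun q : TabIdx T l n lam =>
    rowElt φ y (rowFn l tl) * starW (leftElt φ vv l tl q)) ⊔ domIdeal φ y (rowFn l tl)
  have hmem a : starW (a * rowElt φ y (rowFn l tl)) ∈ P ↔
      rowElt φ y (rowFn l tl) * starW a ∈ P := by
    have hsub : _ ∈ P := Submodule.mem_sup_right (SModEq.sub_mem.1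
      (hφ.starW_mul_rowElt_congr hstar hsw hc (rowFn l tl) a))
    exact ⟨fun h => (Submodule.sub_mem_iff_right P h).1 hsub,
      fun h => (Submodule.sub_mem_iff_left P h).1 hsub⟩
  rw [← (hφ.isAntiInvolution hstar hsw).apply_apply b, ← hmem]
  refine map_mem_of_mem_span_sup (hφ.mul_rowElt_rowFn_mem hc hl tl (starW b)) ?_
    fun z hz => Submodule.mem_sup_right (hφ.starW_mem_domIdeal hstar hsw hc hz)
  rintro _ ⟨q, rfl⟩
  exact (hmem _).2 (Submodule.mem_sup_left (Submodule.subset_span ⟨q, rfl⟩))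

lemma mul_rowElt_rowFn_mul_mem (hc : IsCyclicCellular star y vv) (hl : Function.Bijective l)
    (tl : MCells lam ≃ Fin n) (a b : W) :
    a * rowElt φ y (rowFn l tl) * b ∈ Submodule.span R
      (Set.range fun q : TabIdx T l n lam × TabIdx T l n lam =>
        leftElt φ vv l tl q.1 * rowElt φ y (rowFn l tl) * starW (leftElt φ vv l tl q.2)) ⊔
          domIdeal φ y (rowFn l tl) := by
  refine map_mem_of_mem_span_sup (F := LinearMap.mulRight R b)
    (hφ.mul_rowElt_rowFn_mem hc hl tl a) ?_
    fun z hz => Submodule.mem_sup_right (mem_domIdeal_mul hz _)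
  rintro _ ⟨q, rfl⟩
  rw [LinearMap.mulRight_apply, mul_assoc]
  refine map_mem_of_mem_span_sup (F := LinearMap.mulLeft R (leftElt φ vv l tl q))
    (hφ.rowElt_rowFn_mul_mem hstar hsw hc hl tl b) ?_
    fun z hz => Submodule.mem_sup_right (mul_mem_domIdeal _ hz)
  rintro _ ⟨q', rfl⟩
  exact Submodule.mem_sup_left (Submodule.subset_span ⟨(q, q'), mul_assoc _ _ _⟩)

end IsWreathProduct

end StandardSpan

/-! ### The Murphy-type family -/

section Multipartitions

variable {r n : ℕ} {lam : Fin r → YoungDiagram}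

/-- The cells of a multipartition, as a set of boxes. -/
def cellSet (lam : Fin r → YoungDiagram) : Finset (Box (Fin r)) :=
  Finset.univ.sigma fun k => (lam k).cells

lemma mem_cellSet {c : Box (Fin r)} : c ∈ cellSet lam ↔ c.2 ∈ (lam c.1).cells := by
  simp [cellSet]

lemma cellSet_injective : Function.Injective (cellSet (r := r)) := fun lam mu h =>
  funext fun k => YoungDiagram.ext <| Finset.ext fun c => by
    simpa only [mem_cellSet] using Finset.ext_iff.1 h ⟨k, c⟩

lemma isLowerSet_cellSet (lam : Fin r → YoungDiagram) :
    IsLowerSet (cellSet lam : Set (Box (Fin r))) := by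
  rintro ⟨k, c⟩ ⟨k', c'⟩ h hc
  obtain ⟨hcomp, hcell⟩ := Box.le_iff.1 h
  dsimp only at hcomp hcell
  subst hcomp
  rw [Finset.mem_coe, mem_cellSet] at hc ⊢
  exact (lam _).isLowerSet hcell hc

lemma cellSet_mem_lowerSets (lam : MPar r n) : cellSet lam.1 ∈ lowerSets Box.addable n := by
  rw [(Box.isDifferential_addable 0).mem_lowerSets, cellSet, Finset.card_sigma]
  exact ⟨lam.2, isLowerSet_cellSet _⟩

instance : Finite (MPar r n) :=
  Finite.of_injective (fun lam => (⟨cellSet lam.1, cellSet_mem_lowerSets lam⟩ :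
    {s : Finset (Box (Fin r)) // s ∈ lowerSets Box.addable n}))
    fun _ _ h => Subtype.ext (cellSet_injective (Subtype.ext_iff.1 h))

noncomputable instance : Fintype (MPar r n) :=
  Fintype.ofFinite _

lemma wellFounded_strict_gDomL {Γ : Type*} [PartialOrder Γ] (l : Fin r → Γ) :
    WellFounded fun mu lam : MPar r n => GDomL l mu.1 lam.1 ∧ mu ≠ lam := by
  have : IsTrans (MPar r n) fun mu lam => GDomL l mu.1 lam.1 ∧ mu ≠ lam := by
    refine ⟨fun _ _ _ h h' => ⟨h.1.trans h'.1, ?_⟩⟩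
    rintro rfl
    exact h.2 (Subtype.ext (h.1.antisymm h'.1))
  have : Std.Irrefl fun mu lam : MPar r n => GDomL l mu.1 lam.1 ∧ mu ≠ lam :=
    ⟨fun _ h => h.2 rfl⟩
  exact Finite.wellFounded_of_trans_of_irrefl _

end Multipartitions

section Murphy

variable {R : Type*} [CommRing R] {A : Type*} [Ring A] [Algebra R A]
  {n : ℕ} {W : Type*} [Ring W] [Algebra R W] {Γ : Type*} {T : Γ → Type*} {r : ℕ}

/-- The family of Murphy-type elements `m^λ_{(s,v),(t,w)}`. -/
noncomputable def murphy
    (φ : ((⨂[R] _ : Fin n, A) ⊗[R] (Equiv.Perm (Fin n) →₀ R)) ≃ₗ[R] W)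
    (starW : W →ₗ[R] W) (y : Γ → A) (vv : ∀ γ, T γ → A) (l : Fin r → Γ)
    (tls : ∀ lam : MPar r n, MCells lam.1 ≃ Fin n)
    (x : Σ lam : MPar r n, TabIdx T l n lam.1 × TabIdx T l n lam.1) : W :=
  mwElt φ starW y vv l (tls x.1) x.2.1.1.1 x.2.2.1.1 x.2.1.2 x.2.2.2

/-- The span `N̄^λ` of the members of a family indexed by pairs of tableaux whose shape strictly
dominates `λ`. -/
def strictSpan (R : Type*) [CommRing R] [Algebra R W] [PartialOrder Γ] (l : Fin r → Γ)
    (F : (Σ lam : MPar r n, TabIdx T l n lam.1 × TabIdx T l n lam.1) → W) (lam : MPar r n) :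
    Submodule R W :=
  Submodule.span R {x : W | ∃ mu : MPar r n, GDomL l mu.1 lam.1 ∧ mu ≠ lam ∧ ∃ z, x = F ⟨mu, z⟩}

variable {φ : ((⨂[R] _ : Fin n, A) ⊗[R] (Equiv.Perm (Fin n) →₀ R)) ≃ₗ[R] W}
  {star : A →ₗ[R] A} {starW : W →ₗ[R] W} {y : Γ → A} {vv : ∀ γ, T γ → A} {l : Fin r → Γ}
  {tls : ∀ lam : MPar r n, MCells lam.1 ≃ Fin n}

lemma rowElt_of_injective {f : Fin n → Γ × ℕ} (hone : sElt φ 1 = 1) (hf : Function.Injective f) :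
    rowElt φ y f = wm φ (fun i => y (f i).1) 1 := by
  have hfiber : fiberPerms f = {1} := by
    ext σ
    simp only [mem_fiberPerms, hf.eq_iff, Finset.mem_singleton, Equiv.ext_iff,
      Equiv.Perm.one_apply]
  rw [rowElt, hfiber, permSum, Finset.sum_singleton, hone, mul_one]

lemma IsWreathProduct.murphy_mk (hφ : IsWreathProduct φ) (hstar : IsAntiInvolution star)
    (hsw : IsWreathStar φ star starW) (hl : Function.Injective l) (lam : MPar r n)
    (q q' : TabIdx T l n lam.1) :
    murphy φ starW y vv l tls ⟨lam, (q, q')⟩ = leftElt φ vv l (tls lam) q *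
      rowElt φ y (rowFn l (tls lam)) * starW (leftElt φ vv l (tls lam) q') :=
  mwElt_eq (hφ.isAntiInvolution hstar hsw) hl _ q q'

variable [PartialOrder Γ]

lemma strictSpan_mono {F : (Σ lam : MPar r n, TabIdx T l n lam.1 × TabIdx T l n lam.1) → W}
    {mu lam : MPar r n} (h : GDomL l mu.1 lam.1) :
    strictSpan R l F mu ≤ strictSpan R l F lam := by
  refine Submodule.span_mono ?_
  rintro _ ⟨nu, hdom, hne, z, rfl⟩
  refine ⟨nu, hdom.trans h, ?_, z, rfl⟩
  rintro rfl
  exact hne (Subtype.ext (hdom.antisymm h))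

lemma strictSpan_le_span_range
    (F : (Σ lam : MPar r n, TabIdx T l n lam.1 × TabIdx T l n lam.1) → W) (lam : MPar r n) :
    strictSpan R l F lam ≤ Submodule.span R (Set.range F) :=
  Submodule.span_mono fun _ ⟨mu, _, _, z, h⟩ => ⟨⟨mu, z⟩, h.symm⟩

namespace IsWreathProduct

variable (hφ : IsWreathProduct φ)
include hφ

lemma exists_rowElt_eq (hl : Function.Bijective l) (f : Fin n → Γ × ℕ) :
    ∃ (mu : MPar r n) (a b : W), rowElt φ y f = a * rowElt φ y (rowFn l (tls mu)) * b ∧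
      Dominates (rowFn l (tls mu)) f ∧ Dominates f (rowFn l (tls mu)) := by
  obtain ⟨e, he⟩ := exists_rowsAntitone_relabelRows f
  obtain ⟨mu, S, hS⟩ := he.exists_rowFn_eq hl
  have hmove := rowFn_comp_dperm l (tls mu) S
  refine ⟨mu, sElt φ (dperm (tls mu) S), sElt φ (dperm (tls mu) S)⁻¹, ?_, ?_, ?_⟩
  · rw [hφ.sElt_mul_rowElt, mul_assoc, hφ.sElt_mul_sElt_inv, mul_one, hmove, hS]
    exact rowElt_congr (fun _ => rfl) fun _ _ => relabelRows_eq_iff.symm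
  · refine (comp_dominates _ (dperm (tls mu) S)⁻¹).trans ?_
    rw [hmove, hS]
    exact relabelRows_dominates e f
  · refine (dominates_relabelRows e f).trans ?_
    rw [← hS, ← hmove]
    exact dominates_comp _ _

lemma span_mul_rowElt_mul (hc : IsCyclicCellular star y vv) :
    Submodule.span R {x : W | ∃ (f : Fin n → Γ × ℕ) (a b : W), x = a * rowElt φ y f * b} = ⊤ := by
  refine eq_top_iff.2 fun x _ => ?_
  suffices h : (LinearMap.mulLeft R x).compMultilinearMap (wmMultilinear φ 1) (fun _ => 1) ∈
      Submodule.span R {x : W | ∃ (f : Fin n → Γ × ℕ) (a b : W), x = a * rowElt φ y f * b} by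
    simpa [wmMultilinear_apply, hφ.one] using h
  refine multilinearMap_mem_of_forall_mem_span
    (S := fun _ => {x : A | ∃ (γ : Γ) (u w : A), x = u * y γ * w}) (fun s hs => ?_)
    fun _ => by rw [hc.span_y]; trivial
  choose γ u w hs using hs
  have hrows : rowElt φ y (fun i : Fin n => (γ i, (i : ℕ))) = wm φ (fun i => y (γ i)) 1 :=
    rowElt_of_injective hφ.one fun i j h => Fin.ext (Prod.ext_iff.1 h).2
  refine Submodule.subset_span ⟨fun i => (γ i, i), x * wm φ u 1, wm φ w 1, ?_⟩
  rw [hrows, mul_assoc, mul_assoc, hφ.wm_one_mul_wm_one, hφ.wm_one_mul_wm_one]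
  simp only [LinearMap.compMultilinearMap_apply, LinearMap.mulLeft_apply, wmMultilinear_apply,
    funext hs, mul_assoc]

variable (hstar : IsAntiInvolution star) (hsw : IsWreathStar φ star starW)
  (hl : Function.Bijective l) (hc : IsCyclicCellular star y vv)
include hstar hsw hl hc

lemma exists_mul_rowElt_mul_mem (f : Fin n → Γ × ℕ) :
    ∃ mu : MPar r n, Dominates (rowFn l (tls mu)) f ∧ Dominates f (rowFn l (tls mu)) ∧
      ∀ a b, a * rowElt φ y f * b ∈ Submodule.span R
        (Set.range fun q => murphy φ starW y vv l tls ⟨mu, q⟩) ⊔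
          domIdeal φ y (rowFn l (tls mu)) := by
  obtain ⟨mu, a', b', hf, hdom, hdom'⟩ := hφ.exists_rowElt_eq (tls := tls) (y := y) hl f
  refine ⟨mu, hdom, hdom', fun a b => ?_⟩
  have h := hφ.mul_rowElt_rowFn_mul_mem hstar hsw hc hl (tls mu) (a * a') (b' * b)
  simpa only [hf, hφ.murphy_mk hstar hsw hl.injective, mul_assoc] using h

lemma domIdeal_le_strictSpan (lam : MPar r n) :
    domIdeal φ y (rowFn l (tls lam)) ≤ strictSpan R l (murphy φ starW y vv l tls) lam := by
  induction lam using (wellFounded_strict_gDomL (n := n) l).induction with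
  | _ lam ih =>
    refine Submodule.span_le.2 ?_
    rintro _ ⟨g, a, b, hg, rfl⟩
    obtain ⟨mu, hmu, -, hmem⟩ := hφ.exists_mul_rowElt_mul_mem (tls := tls) hstar hsw hl hc g
    have hdom : GDomL l mu.1 lam.1 :=
      (gDomL_iff_dominates hl (tls mu) (tls lam)).2 (hmu.trans hg.1)
    have hne : mu ≠ lam := by
      rintro rfl
      exact hg.2 hmu
    refine SetLike.le_def.1 (sup_le (Submodule.span_le.2 ?_)
      ((ih mu ⟨hdom, hne⟩).trans (strictSpan_mono hdom))) (hmem a b)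
    rintro _ ⟨q, rfl⟩
    exact Submodule.subset_span ⟨mu, hdom, hne, q, rfl⟩

lemma span_murphy : Submodule.span R (Set.range (murphy φ starW y vv l tls)) = ⊤ := by
  rw [eq_top_iff, ← hφ.span_mul_rowElt_mul hc, Submodule.span_le]
  rintro _ ⟨f, a, b, rfl⟩
  obtain ⟨mu, -, -, hmem⟩ := hφ.exists_mul_rowElt_mul_mem (tls := tls) hstar hsw hl hc f
  have hideal : domIdeal φ y (rowFn l (tls mu)) ≤ _ :=
    (hφ.domIdeal_le_strictSpan hstar hsw hl hc mu).trans (strictSpan_le_span_range _ mu)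
  refine SetLike.le_def.1 (sup_le (Submodule.span_mono ?_) hideal) (hmem a b)
  rintro _ ⟨q, rfl⟩
  exact ⟨⟨mu, q⟩, rfl⟩

lemma exists_mul_murphy_congr [∀ γ, Fintype (T γ)] (lam : MPar r n) (q : TabIdx T l n lam.1)
    (a : W) : ∃ coef : TabIdx T l n lam.1 → R, ∀ q' : TabIdx T l n lam.1,
      a * murphy φ starW y vv l tls ⟨lam, (q, q')⟩ ≡
        ∑ u, coef u • murphy φ starW y vv l tls ⟨lam, (u, q')⟩
        [SMOD strictSpan R l (murphy φ starW y vv l tls) lam] := by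
  obtain ⟨x, hx, z, hz, hxz⟩ := Submodule.mem_sup.1
    (hφ.mul_rowElt_rowFn_mem hc hl (tls lam) (a * leftElt φ vv l (tls lam) q))
  obtain ⟨coef, rfl⟩ := (Submodule.mem_span_range_iff_exists_fun R).1 hx
  refine ⟨coef, fun q' => SModEq.mono (hφ.domIdeal_le_strictSpan hstar hsw hl hc lam)
    (SModEq.sub_mem.2 ?_)⟩
  have hsub : a * murphy φ starW y vv l tls ⟨lam, (q, q')⟩ -
      ∑ u, coef u • murphy φ starW y vv l tls ⟨lam, (u, q')⟩ =
        z * starW (leftElt φ vv l (tls lam) q') := by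
    rw [eq_sub_of_add_eq' hxz, sub_mul, Finset.sum_mul]
    simp only [hφ.murphy_mk hstar hsw hl.injective, mul_assoc, smul_mul_assoc]
  rw [hsub]
  exact mem_domIdeal_mul hz _

lemma starW_murphy_congr (lam : MPar r n) (q q' : TabIdx T l n lam.1) :
    starW (murphy φ starW y vv l tls ⟨lam, (q, q')⟩) ≡ murphy φ starW y vv l tls ⟨lam, (q', q)⟩
      [SMOD strictSpan R l (murphy φ starW y vv l tls) lam] := by
  refine SModEq.mono (hφ.domIdeal_le_strictSpan hstar hsw hl hc lam) ?_
  have hanti := hφ.isAntiInvolution hstar hsw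
  rw [hφ.murphy_mk hstar hsw hl.injective, hφ.murphy_mk hstar hsw hl.injective, hanti.map_mul,
    hanti.apply_apply, mul_assoc (leftElt φ vv l (tls lam) q')]
  exact mul_congr_domIdeal_left _ (hφ.starW_mul_rowElt_congr hstar hsw hc _ _)

lemma exists_generator_murphy (lam : MPar r n) (q₀ : TabIdx T l n lam.1) :
    ∃ z ∈ Submodule.span R (Set.range fun q => murphy φ starW y vv l tls ⟨lam, (q, q₀)⟩) ⊔
        strictSpan R l (murphy φ starW y vv l tls) lam,
      ∀ q, ∃ a, a * z = murphy φ starW y vv l tls ⟨lam, (q, q₀)⟩ := by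
  refine ⟨rowElt φ y (rowFn l (tls lam)) * starW (leftElt φ vv l (tls lam) q₀), ?_, fun q =>
    ⟨leftElt φ vv l (tls lam) q, by rw [hφ.murphy_mk hstar hsw hl.injective, mul_assoc]⟩⟩
  have h := hφ.mul_rowElt_rowFn_mem hc hl (tls lam) 1
  rw [one_mul] at h
  refine map_mem_of_mem_span_sup
    (F := LinearMap.mulRight R (starW (leftElt φ vv l (tls lam) q₀))) h ?_ fun z hz =>
      Submodule.mem_sup_right (hφ.domIdeal_le_strictSpan hstar hsw hl hc lam
        (mem_domIdeal_mul hz _))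
  rintro _ ⟨q, rfl⟩
  exact Submodule.mem_sup_left
    (Submodule.subset_span ⟨q, hφ.murphy_mk hstar hsw hl.injective lam q q₀⟩)

end IsWreathProduct

end Murphy

/-! ### Counting -/

section Counting

variable {Γ : Type*} {T : Γ → Type*} {r n : ℕ} {lam : Fin r → YoungDiagram}

/-- The box underlying a cell of a multipartition. -/
def MCells.toBox (x : MCells lam) : Box (Fin r) :=
  ⟨x.1, x.2⟩

lemma MCells.toBox_injective : Function.Injective (MCells.toBox (lam := lam)) := fun _ _ h =>
  MCells.ext (congrArg (fun c : Box (Fin r) => c.1) h) (congrArg (fun c : Box (Fin r) => c.2) h)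

lemma MCells.range_toBox : Set.range (MCells.toBox (lam := lam)) = cellSet lam := by
  ext c
  rw [Finset.mem_coe, mem_cellSet]
  exact ⟨fun ⟨x, hx⟩ => hx ▸ x.2.2, fun h => ⟨⟨c.1, c.2, h⟩, rfl⟩⟩

lemma IsStdTableau.isLinExt {S : MCells lam ≃ Fin n} (hS : IsStdTableau S) :
    IsLinExt (cellSet lam) fun i => (S.symm i).toBox := by
  refine ⟨(S.symm.surjective.range_comp MCells.toBox).trans MCells.range_toBox, fun i j h => ?_⟩
  obtain ⟨hcomp, hrow, hcol⟩ := Box.le_iff.1 h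
  rcases eq_or_ne (S.symm i) (S.symm j) with hij | hij
  · exact (S.symm.injective hij).le
  · simpa only [Equiv.apply_symm_apply] using (hS _ _ hcomp hrow hcol hij).le

lemma card_isStdTableau_le (lam : Fin r → YoungDiagram) :
    Fintype.card {S : MCells lam ≃ Fin n // IsStdTableau S} ≤ linExtCount n (cellSet lam) := by
  have := finite_isLinExt n (cellSet lam)
  let ext (S : {S : MCells lam ≃ Fin n // IsStdTableau S}) :
      {q : Fin n → Box (Fin r) // IsLinExt (cellSet lam) q} :=
    ⟨fun i => (S.1.symm i).toBox, S.2.isLinExt⟩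
  have hext : Function.Injective ext := fun S S' h =>
    Subtype.ext <| Equiv.symm_bijective.injective <| Equiv.ext fun i =>
      MCells.toBox_injective (congrFun (Subtype.ext_iff.1 h) i)
  rw [← Nat.card_eq_fintype_card]
  exact (Nat.card_le_card_of_injective ext hext).trans (card_isLinExt_le n _)

lemma prod_MCells (lam : Fin r → YoungDiagram) (w : Fin r → ℕ) :
    ∏ x : MCells lam, w x.1 = ∏ c ∈ cellSet lam, w c.1 :=
  Finset.prod_bij (fun x _ => x.toBox) (fun x _ => mem_cellSet.2 x.2.2)
    (fun _ _ _ _ h => MCells.toBox_injective h)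
    (fun c hc => ⟨⟨c.1, c.2, mem_cellSet.1 hc⟩, Finset.mem_univ _, rfl⟩) fun _ _ => rfl

lemma sum_linExtCount_cellSet_sq_le (n : ℕ) (w : Fin r → ℕ) :
    ∑ lam : MPar r n, linExtCount n (cellSet lam.1) ^ 2 * ∏ c ∈ cellSet lam.1, w c.1 ≤
      (∑ k, w k) ^ n * n.factorial := by
  rw [← (Box.isDifferential_addable w).sum_linExtCount_sq n,
    ← Finset.sum_image (g := fun lam : MPar r n => cellSet lam.1)
      (f := fun s => linExtCount n s ^ 2 * ∏ c ∈ s, w c.1)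
      fun _ _ _ _ h => Subtype.ext (cellSet_injective h)]
  exact Finset.sum_le_sum_of_subset
    (Finset.image_subset_iff.2 fun lam _ => cellSet_mem_lowerSets lam)

variable [∀ γ, Fintype (T γ)]

lemma card_tabIdx_le (l : Fin r → Γ) (lam : Fin r → YoungDiagram) :
    Fintype.card (TabIdx T l n lam) ≤
      linExtCount n (cellSet lam) * ∏ c ∈ cellSet lam, Fintype.card (T (l c.1)) := by
  have hcard : Fintype.card (TabIdx T l n lam) =
      Fintype.card {S : MCells lam ≃ Fin n // IsStdTableau S} *
        ∏ x : MCells lam, Fintype.card (T (l x.1)) := by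
    rw [← Fintype.card_pi, ← Fintype.card_prod]
    exact Fintype.card_congr (Equiv.refl _)
  rw [hcard, prod_MCells lam fun k => Fintype.card (T (l k))]
  exact Nat.mul_le_mul_right _ (card_isStdTableau_le lam)

lemma card_murphy_index_le (l : Fin r → Γ) :
    Fintype.card (Σ lam : MPar r n, TabIdx T l n lam.1 × TabIdx T l n lam.1) ≤
      (∑ k, Fintype.card (T (l k)) ^ 2) ^ n * n.factorial := by
  rw [Fintype.card_sigma]
  refine (Finset.sum_le_sum fun lam _ => ?_).trans
    (sum_linExtCount_cellSet_sq_le n fun k => Fintype.card (T (l k)) ^ 2)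
  rw [Fintype.card_prod, Finset.prod_pow, ← mul_pow, ← sq]
  exact Nat.pow_le_pow_left (card_tabIdx_le l lam.1) 2

end Counting

section Independence

variable {R : Type*} [CommRing R] {A : Type*} [Ring A] [Algebra R A]
  {n : ℕ} {W : Type*} [Ring W] [Algebra R W]
  {Γ : Type*} [PartialOrder Γ] {T : Γ → Type*} [∀ γ, Fintype (T γ)] {r : ℕ}

lemma CellDatum.finrank_wreath [Nontrivial R] (D : CellDatum R A Γ T)
    (φ : ((⨂[R] _ : Fin n, A) ⊗[R] (Equiv.Perm (Fin n) →₀ R)) ≃ₗ[R] W)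
    {l : Fin r → Γ} (hl : Function.Bijective l) :
    Module.finrank R W = (∑ k, Fintype.card (T (l k)) ^ 2) ^ n * n.factorial := by
  let b : Module.Basis (Σ k : Fin r, T (l k) × T (l k)) R A :=
    (Module.Basis.mk D.indep D.span_top.ge).reindex
      (Equiv.sigmaCongrLeft (β := fun γ => T γ × T γ) (Equiv.ofBijective l hl)).symm
  let B := ((Basis.piTensorProduct fun _ : Fin n => b).tensorProduct
    (Finsupp.basisSingleOne (ι := Equiv.Perm (Fin n)) (R := R))).map φ
  rw [Module.finrank_eq_card_basis B, Fintype.card_prod, Fintype.card_perm, Fintype.card_fin]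
  simp only [Fintype.card_pi, Fintype.card_sigma, Fintype.card_prod, Finset.prod_const,
    Finset.card_univ, Fintype.card_fin, sq]

lemma linearIndependent_murphy (D : CellDatum R A Γ T)
    {φ : ((⨂[R] _ : Fin n, A) ⊗[R] (Equiv.Perm (Fin n) →₀ R)) ≃ₗ[R] W} {starW : W →ₗ[R] W}
    {y : Γ → A} {vv : ∀ γ, T γ → A} {l : Fin r → Γ} (hl : Function.Bijective l)
    {tls : ∀ lam : MPar r n, MCells lam.1 ≃ Fin n}
    (hspan : Submodule.span R (Set.range (murphy φ starW y vv l tls)) = ⊤) :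
    LinearIndependent R (murphy φ starW y vv l tls) := by
  rcases subsingleton_or_nontrivial R with hR | hR
  · exact linearIndependent_of_subsingleton
  · refine linearIndependent_of_top_le_span_of_card_le_finrank hspan.ge ?_
    rw [D.finrank_wreath φ hl]
    exact card_murphy_index_le l

end Independence

theorem stmt_13_general {R : Type*} [CommRing R] {A : Type*} [Ring A] [Algebra R A]
    {Γ : Type*} [PartialOrder Γ] {T : Γ → Type*} [∀ γ, Fintype (T γ)] (D : CellDatum R A Γ T)
    {M : Γ → Type*} [∀ γ, AddCommGroup (M γ)] [∀ γ, Module R (M γ)]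
    [∀ γ, Module A (M γ)] [∀ γ, IsScalarTower R A (M γ)]
    {e : ∀ γ, T γ → M γ} (hM : ∀ γ, IsCellModule D γ (M γ) (e γ))
    {δ : ∀ γ, M γ} {p : ∀ γ, T γ → R} (hp : ∀ γ, ∑ s : T γ, p γ s • e γ s = δ γ) {y : Γ → A}
    (hylift : ∀ γ, y γ ≡ ∑ s, ∑ t, (p γ s * p γ t) • D.c γ s t [SMOD D.Abar γ])
    {vv : ∀ γ, T γ → A} (hvv : ∀ γ t, vv γ t • δ γ = e γ t)
    {r : ℕ} {l : Fin r → Γ} (hl : Function.Bijective l)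
    {n : ℕ} (tls : ∀ lam : MPar r n, MCells lam.1 ≃ Fin n)
    {W : Type*} [Ring W] [Algebra R W]
    {φ : ((⨂[R] _ : Fin n, A) ⊗[R] (Equiv.Perm (Fin n) →₀ R)) ≃ₗ[R] W}
    (hφ : IsWreathProduct φ) {starW : W →ₗ[R] W} (hsw : IsWreathStar φ D.star starW) :
    let m := murphy φ starW y vv l tls
    (LinearIndependent R m ∧ Submodule.span R (Set.range m) = ⊤) ∧
    (∀ lam q a, ∃ coef : TabIdx T l n lam.1 → R, ∀ q',
      a * m ⟨lam, (q, q')⟩ ≡ ∑ u, coef u • m ⟨lam, (u, q')⟩ [SMOD strictSpan R l m lam]) ∧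
    (∀ lam q q', starW (m ⟨lam, (q, q')⟩) ≡ m ⟨lam, (q', q)⟩ [SMOD strictSpan R l m lam]) ∧
    (∀ lam q₀, ∃ z ∈ Submodule.span R (Set.range fun q => m ⟨lam, (q, q₀)⟩) ⊔
        strictSpan R l m lam,
      ∀ q, ∃ a, a * z ≡ m ⟨lam, (q, q₀)⟩ [SMOD strictSpan R l m lam]) := by
  have : Finite Γ := Finite.of_surjective l hl.surjective
  have hy γ : y γ ≡ ∑ t, p γ t • D.col γ t (p γ) [SMOD D.Abar γ] := by
    have hcol : ∑ t, p γ t • D.col γ t (p γ) = ∑ s, ∑ t, (p γ s * p γ t) • D.c γ s t := by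
      rw [Finset.sum_comm]
      simp only [CellDatum.col_apply, Finset.smul_sum, smul_smul, mul_comm]
    exact hcol ▸ hylift γ
  have hc : IsCyclicCellular D.star y vv :=
    D.isCyclicCellular hM hy fun γ u => by rw [hp, hvv]
  have hstar := D.isAntiInvolution
  have hspan := hφ.span_murphy (tls := tls) hstar hsw hl hc
  refine ⟨⟨linearIndependent_murphy D hl hspan, hspan⟩,
    hφ.exists_mul_murphy_congr hstar hsw hl hc, hφ.starW_murphy_congr hstar hsw hl hc,
    fun lam q₀ => ?_⟩
  obtain ⟨z, hz, hgen⟩ := hφ.exists_generator_murphy hstar hsw hl hc lam q₀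
  exact ⟨z, hz, fun q => (hgen q).imp fun _ h => congrArg _ h⟩

/-- If `A` is a cyclic cellular algebra over an integral domain `R`, then
the wreath product `A ≀ 𝔖_n` is cyclic cellular, with poset the `Γ`-multipartitions of `n`
ordered by `Γ`-dominance, and cellular basis the Murphy-type elements
`m^λ_{(s,v),(t,w)} = d(s) v y^α x_λ w* d(t)*`: this family is an `R`-basis of `A ≀ 𝔖_n`,
satisfies the cellular multiplication and involution axioms relative to the order
`⊵_Γ`, and each cell module is cyclic. -/
theorem stmt_13 {R : Type*} [CommRing R] [IsDomain R] {A : Type*} [Ring A] [Algebra R A]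
    {Γ : Type*} [PartialOrder Γ] {T : Γ → Type*} [∀ γ, Fintype (T γ)]
    (D : CellDatum R A Γ T)
    (M : Γ → Type*) [∀ γ, AddCommGroup (M γ)] [∀ γ, Module R (M γ)]
    [∀ γ, Module A (M γ)] [∀ γ, IsScalarTower R A (M γ)]
    (e : ∀ γ, T γ → M γ) (hM : ∀ γ, IsCellModule D γ (M γ) (e γ))
    (δ : ∀ γ, M γ) (hδ : ∀ γ, Submodule.span A {δ γ} = ⊤)
    (p : ∀ γ, T γ → R) (hp : ∀ γ, ∑ s : T γ, p γ s • e γ s = δ γ)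
    (y : Γ → A) (hymem : ∀ γ, y γ ∈ D.Aup γ)
    (hylift : ∀ γ,
      y γ - ∑ s : T γ, ∑ t : T γ, (p γ s * p γ t) • D.c γ s t ∈ D.Abar γ)
    (vv : ∀ γ, T γ → A) (hvv : ∀ γ (t : T γ), vv γ t • δ γ = e γ t)
    {r : ℕ} (l : Fin r → Γ) (hl : Function.Bijective l)
    (hcomp : ∀ i j : Fin r, l j ≤ l i → i ≤ j)
    (n : ℕ)
    -- a choice of superstandard tableau `t^λ` for every multipartition `λ` of `n`
    (tls : ∀ lam : MPar r n, MCells lam.1 ≃ Fin n)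
    (htls : ∀ lam : MPar r n, IsSuperstandard (tls lam))
    -- the wreath product `W = A ≀ 𝔖_n`
    (W : Type*) [Ring W] [Algebra R W]
    (φ : ((⨂[R] _ : Fin n, A) ⊗[R] (Equiv.Perm (Fin n) →₀ R)) ≃ₗ[R] W)
    (hone : wm φ (fun _ => (1 : A)) 1 = 1)
    (hmul : ∀ (a b : Fin n → A) (π σ : Equiv.Perm (Fin n)),
      wm φ a π * wm φ b σ = wm φ (fun i => a i * b (π⁻¹ i)) (π * σ))
    (starW : W →ₗ[R] W)
    (hsw : ∀ (a : Fin n → A) (π : Equiv.Perm (Fin n)),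
      starW (wm φ a π) = wm φ (fun i => D.star (a (π i))) π⁻¹) :
    -- the Murphy-type basis of `A ≀ 𝔖_n`
    ∀ F : (Σ lam : MPar r n, TabIdx T l n lam.1 × TabIdx T l n lam.1) → W,
      (∀ (lam : MPar r n) (q q' : TabIdx T l n lam.1),
        F ⟨lam, (q, q')⟩ =
          mwElt φ starW y vv l (tls lam) q.1.1 q'.1.1 q.2 q'.2) →
      -- it is an `R`-basis
      (LinearIndependent R F ∧ Submodule.span R (Set.range F) = ⊤) ∧
      -- the cellular multiplication rule, modulo `N̄^λ`
      (∀ (lam : MPar r n) (q : TabIdx T l n lam.1) (a : W),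
        ∃ coef : TabIdx T l n lam.1 → R, ∀ q' : TabIdx T l n lam.1,
          a * F ⟨lam, (q, q')⟩ - ∑ u : TabIdx T l n lam.1, coef u • F ⟨lam, (u, q')⟩
            ∈ Submodule.span R {x : W | ∃ mu : MPar r n,
                GDomL l mu.1 lam.1 ∧ mu ≠ lam ∧ ∃ z, x = F ⟨mu, z⟩}) ∧
      -- the cellular involution rule
      (∀ (lam : MPar r n) (q q' : TabIdx T l n lam.1),
        starW (F ⟨lam, (q, q')⟩) - F ⟨lam, (q', q)⟩
          ∈ Submodule.span R {x : W | ∃ mu : MPar r n,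
              GDomL l mu.1 lam.1 ∧ mu ≠ lam ∧ ∃ z, x = F ⟨mu, z⟩}) ∧
      -- every cell module is cyclic
      (∀ (lam : MPar r n) (q0 : TabIdx T l n lam.1), ∃ z : W,
        z ∈ Submodule.span R (Set.range fun q : TabIdx T l n lam.1 => F ⟨lam, (q, q0)⟩)
            ⊔ Submodule.span R {x : W | ∃ mu : MPar r n,
                GDomL l mu.1 lam.1 ∧ mu ≠ lam ∧ ∃ z', x = F ⟨mu, z'⟩} ∧
        ∀ q : TabIdx T l n lam.1, ∃ a : W,
          a * z - F ⟨lam, (q, q0)⟩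
            ∈ Submodule.span R {x : W | ∃ mu : MPar r n,
                GDomL l mu.1 lam.1 ∧ mu ≠ lam ∧ ∃ z', x = F ⟨mu, z'⟩}) := by
  intro F hF
  obtain rfl : F = murphy φ starW y vv l tls := funext fun ⟨lam, q, q'⟩ => hF lam q q'
  simpa only [SModEq.sub_mem, strictSpan] using stmt_13_general D hM hp
    (fun γ => SModEq.sub_mem.2 (hylift γ)) hvv hl tls ⟨hone, hmul⟩ hsw
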